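/- arXiv:1607.04719 — 2 statements merged into one kernel-verified Lean document; each statement's English description precedes it below -/
import Mathlib

section
/- Let n ≥ 1, p > 1, and let u : ℝⁿ → ℝ be a smooth stable solution of (−Δ)³u = |u|^{p−1}u. Then there exists a constant C > 0 such that for every R > 0: (i) ∫_{B_R(0)} |u|^{p+1} + ∫_{B_R(0)} ‖∇(Δu)‖² ≤ C R^{−6} ∫_{B_{2R}(0)} u², and (ii) ∫_{B_R(0)} |u|^{p+1} + ∫_{B_R(0)} ‖∇(Δu)‖² ≤ C R^{n − 6(p+1)/(p−1)}. -/
open MeasureTheory Filter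

noncomputable section

/-- The Euclidean Laplacian of `u` at `x`. -/
def laplacian {n : ℕ} (u : EuclideanSpace ℝ (Fin n) → ℝ) (x : EuclideanSpace ℝ (Fin n)) : ℝ :=
  ∑ i : Fin n, iteratedFDeriv ℝ 2 u x ![EuclideanSpace.single i 1, EuclideanSpace.single i 1]

namespace TriH

/-- Smooth functions as a subalgebra. -/
def S (n : ℕ) : Subalgebra ℝ (EuclideanSpace ℝ (Fin n) → ℝ) where
  carrier := {f | ContDiff ℝ (⊤ : ℕ∞) f}
  mul_mem' {a b} ha hb := by
    have ha' : ContDiff ℝ (⊤ : ℕ∞) a := ha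
    have hb' : ContDiff ℝ (⊤ : ℕ∞) b := hb
    exact ha'.mul hb'
  add_mem' {a b} ha hb := by
    have ha' : ContDiff ℝ (⊤ : ℕ∞) a := ha
    have hb' : ContDiff ℝ (⊤ : ℕ∞) b := hb
    exact ha'.add hb'
  algebraMap_mem' r := by
    have : ContDiff ℝ (⊤ : ℕ∞) (fun _ : EuclideanSpace ℝ (Fin n) => r) := contDiff_const
    exact this

variable {n : ℕ}

theorem S_smooth (f : S n) : ContDiff ℝ (⊤ : ℕ∞) f.1 := f.2

theorem S_diff (f : S n) : Differentiable ℝ f.1 := (S_smooth f).differentiable (by simp)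

theorem S_cont (f : S n) : Continuous f.1 := (S_smooth f).continuous

/-- Partial derivative, as a linear map. -/
def Dlin (i : Fin n) : S n →ₗ[ℝ] S n where
  toFun f := ⟨fun x => fderiv ℝ f.1 x (EuclideanSpace.single i 1), by
    have : ContDiff ℝ (⊤ : ℕ∞) (fun x => fderiv ℝ f.1 x (EuclideanSpace.single i 1)) :=
      ((S_smooth f).fderiv_right (m := (⊤ : ℕ∞)) (by simp)).clm_apply contDiff_const
    exact this⟩
  map_add' f g := by
    ext x
    change fderiv ℝ (f.1 + g.1) x _ = fderiv ℝ f.1 x _ + fderiv ℝ g.1 x _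
    rw [fderiv_add ((S_diff f) x) ((S_diff g) x)]
    rfl
  map_smul' c f := by
    ext x
    change fderiv ℝ (c • f.1) x _ = c * fderiv ℝ f.1 x _
    rw [fderiv_const_smul ((S_diff f) x)]
    rfl

/-- Partial derivative, as a derivation. -/
def D (i : Fin n) : Derivation ℝ (S n) (S n) := Derivation.mk' (Dlin i) (by
  intro f g
  ext x
  change fderiv ℝ (f.1 * g.1) x _ = f.1 x * fderiv ℝ g.1 x _ + g.1 x * fderiv ℝ f.1 x _
  rw [fderiv_mul ((S_diff f) x) ((S_diff g) x)]
  rfl)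

theorem D_apply (i : Fin n) (f : S n) (x) :
    (D i f).1 x = fderiv ℝ f.1 x (EuclideanSpace.single i 1) := rfl

theorem D_mul (i : Fin n) (f g : S n) : D i (f * g) = f * D i g + g * D i f := by
  simp

theorem fderiv_D (i : Fin n) (f : S n) (x v : EuclideanSpace ℝ (Fin n)) :
    fderiv ℝ (D i f).1 x v = fderiv ℝ (fderiv ℝ f.1) x v (EuclideanSpace.single i 1) := by
  have h : DifferentiableAt ℝ (fderiv ℝ f.1) x :=
    (((S_smooth f).fderiv_right (m := (⊤ : ℕ∞)) (by simp)).differentiable (by simp)) x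
  have : (D i f).1 = fun y => (fderiv ℝ f.1 y) (EuclideanSpace.single i 1) := rfl
  rw [this, fderiv_clm_apply h (by fun_prop)]
  simp

theorem D_comm (i j : Fin n) (f : S n) : D i (D j f) = D j (D i f) := by
  ext x
  rw [D_apply, D_apply, fderiv_D, fderiv_D]
  exact (((S_smooth f).contDiffAt (x := x)).isSymmSndFDerivAt (by
    simp only [minSmoothness_of_isRCLikeNormedField]
    exact WithTop.coe_le_coe.2 (le_top : (2 : ℕ∞) ≤ ⊤))) _ _

/-- Laplacian on smooth functions. -/
def Lap (f : S n) : S n := ∑ i, D i (D i f)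

theorem coe_sum {ι : Type*} (s : Finset ι) (f : ι → S n) (x) :
    (∑ i ∈ s, f i).1 x = ∑ i ∈ s, (f i).1 x := by
  have : (∑ i ∈ s, f i).1 = ∑ i ∈ s, (f i).1 := by
    exact map_sum (S n).val f s
  rw [this]; simp

theorem laplacian_coe (f : S n) : laplacian f.1 = (Lap f).1 := by
  funext x
  rw [Lap, coe_sum, laplacian]
  refine Finset.sum_congr rfl fun i _ => ?_
  rw [iteratedFDeriv_two_apply, D_apply, fderiv_D]
  simp

theorem gradient_coe (f : S n) (x) : ‖gradient f.1 x‖ ^ 2 = ∑ i, (D i f).1 x ^ 2 := by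
  rw [EuclideanSpace.norm_sq_eq]
  refine Finset.sum_congr rfl fun i _ => ?_
  rw [D_apply, ← inner_gradient_left]
  rw [EuclideanSpace.inner_single_right]
  simp

/-- Compactly supported smooth functions. -/
def CS (n : ℕ) : Ideal (S n) where
  carrier := {f | HasCompactSupport f.1}
  add_mem' := fun ha hb => HasCompactSupport.add ha hb
  zero_mem' := HasCompactSupport.zero
  smul_mem' := fun c _ hf => HasCompactSupport.mul_left (f := c.1) hf

theorem CS.integrable {f : S n} (hf : f ∈ CS n) : Integrable f.1 :=
  (S_cont f).integrable_of_hasCompactSupport hf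

theorem D_mem (i : Fin n) {f : S n} (hf : f ∈ CS n) : D i f ∈ CS n :=
  HasCompactSupport.fderiv_apply (𝕜 := ℝ) hf _

/-- Integral. -/
def I (f : S n) : ℝ := ∫ x, f.1 x

theorem I_add {f g : S n} (hf : f ∈ CS n) (hg : g ∈ CS n) : I (f + g) = I f + I g :=
  integral_add (CS.integrable hf) (CS.integrable hg)

theorem I_sub {f g : S n} (hf : f ∈ CS n) (hg : g ∈ CS n) : I (f - g) = I f - I g :=
  integral_sub (CS.integrable hf) (CS.integrable hg)

theorem I_neg (f : S n) : I (-f) = - I f := integral_neg _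

theorem I_sum {ι : Type*} (s : Finset ι) {f : ι → S n} (hf : ∀ i, f i ∈ CS n) :
    I (∑ i ∈ s, f i) = ∑ i ∈ s, I (f i) := by
  simp only [I, coe_sum]
  exact integral_finsetSum _ (fun i _ => CS.integrable (hf i))

theorem I_D (i : Fin n) {f : S n} (hf : f ∈ CS n) : I (D i f) = 0 := by
  have hD : Integrable (fun x => fderiv ℝ f.1 x (EuclideanSpace.single i 1)) :=
    CS.integrable (D_mem i hf)
  have h := integral_mul_fderiv_eq_neg_fderiv_mul_of_integrable (μ := volume)
    (f := fun _ : EuclideanSpace ℝ (Fin n) => (1 : ℝ)) (g := f.1)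
    (v := EuclideanSpace.single i 1) (by simp)
    (by simpa using hD) (by simpa using CS.integrable hf)
    (fun x _ => by fun_prop) (fun x _ => (S_diff f) x)
  simp only [one_mul] at h
  rw [show I (D i f) = ∫ x, fderiv ℝ f.1 x (EuclideanSpace.single i 1) from rfl, h]
  simp

theorem I_ibp (i : Fin n) (f : S n) {g : S n} (hg : g ∈ CS n) :
    I (D i f * g) = - I (f * D i g) := by
  have h := I_D i (Ideal.mul_mem_left (CS n) f hg)
  rw [D_mul, I_add (Ideal.mul_mem_left _ _ (D_mem i hg)) (Ideal.mul_mem_right _ _ hg),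
    mul_comm g] at h
  linarith

theorem I_mono {f g : S n} (hf : f ∈ CS n) (hg : g ∈ CS n) (h : ∀ x, f.1 x ≤ g.1 x) :
    I f ≤ I g := integral_mono (CS.integrable hf) (CS.integrable hg) h

theorem Lap_mem {f : S n} (hf : f ∈ CS n) : Lap f ∈ CS n :=
  Submodule.sum_mem _ fun i _ => D_mem i (D_mem i hf)

/-- error term -/
def X (u e : S n) (k : Fin n) : S n :=
  D k e * Lap u + 2 * ∑ i, (D k (D i u) * D i e + D i u * D k (D i e)) + D k u * Lap e
    + u * D k (Lap e)

/-- error term -/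
def Z (u e : S n) (k : Fin n) : S n :=
  -(4 * ∑ i, D i u * D i e * D k e) - 2 * D k u * ∑ i, D i e * D i e
    - u * (2 * D k e * Lap e + 4 * ∑ i, D i e * D k (D i e))

theorem Lap_mul (u e : S n) :
    Lap (u * e) = e * Lap u + 2 * ∑ i, D i u * D i e + u * Lap e := by
  simp only [Lap, D_mul, map_add, Finset.mul_sum, ← Finset.sum_add_distrib]
  refine Finset.sum_congr rfl fun i _ => ?_
  ring

theorem D_two (k : Fin n) : D k (2 : S n) = 0 := by
  have := (D k).map_natCast 2
  simpa using this

theorem D_Lap_mul (u e : S n) (k : Fin n) :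
    D k (Lap (u * e)) = e * D k (Lap u) + X u e k := by
  rw [Lap_mul, X]
  simp only [D_mul, map_add, map_sum, D_two]
  have : ∑ i, (D i u * D k (D i e) + D i e * D k (D i u))
    = ∑ i, (D k (D i u) * D i e + D i u * D k (D i e)) :=
    Finset.sum_congr rfl fun i _ => by ring
  rw [this]
  ring

theorem X_sq (u e : S n) (k : Fin n) : X u (e * e) k = 2 * e * X u e k - Z u e k := by
  rw [X, X, Z, Lap_mul]
  simp only [D_mul, map_add, map_sum, D_two]
  have h1 : ∑ i, (D k (D i u) * (e * D i e + e * D i e) +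
        D i u * (e * D k (D i e) + D i e * D k e + (e * D k (D i e) + D i e * D k e)))
     = 2 * e * ∑ i, (D k (D i u) * D i e + D i u * D k (D i e))
      + 2 * ∑ i, D i u * D i e * D k e := by
    simp only [Finset.mul_sum, ← Finset.sum_add_distrib]
    exact Finset.sum_congr rfl fun i _ => by ring
  have h2 : ∑ i, (D i e * D k (D i e) + D i e * D k (D i e)) = 2 * ∑ i, D i e * D k (D i e) := by
    simp only [Finset.mul_sum]
    exact Finset.sum_congr rfl fun i _ => by ring
  rw [h1, h2]
  ring

/-- Green: `∫ Δf g = ∫ f Δg`. -/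
theorem I_Lap (f : S n) {g : S n} (hg : g ∈ CS n) : I (Lap f * g) = I (f * Lap g) := by
  rw [Lap, Lap, Finset.sum_mul, Finset.mul_sum,
    I_sum _ (fun i => Ideal.mul_mem_left _ _ hg),
    I_sum _ (fun i => Ideal.mul_mem_left _ _ (D_mem i (D_mem i hg)))]
  refine Finset.sum_congr rfl fun i _ => ?_
  rw [I_ibp _ _ hg, I_ibp _ _ (D_mem i hg), neg_neg]

theorem I_triple (u : S n) {g : S n} (hg : g ∈ CS n) :
    I (-(Lap (Lap (Lap u))) * g) = I (∑ k, D k (Lap u) * D k (Lap g)) := by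
  rw [show -(Lap (Lap (Lap u))) * g = -(Lap (Lap (Lap u)) * g) by ring, I_neg, I_Lap _ hg]
  have hLg := Lap_mem hg
  rw [I_sum _ (fun i => Ideal.mul_mem_left _ _ (D_mem i hLg)), Lap, Finset.sum_mul,
    I_sum _ (fun i => Ideal.mul_mem_left _ _ hLg), ← Finset.sum_neg_distrib]
  refine Finset.sum_congr rfl fun i _ => ?_
  rw [I_ibp _ _ hLg, neg_neg]


/-- Pointwise bound of a smooth function at a point. -/
theorem bd_mul {f g : S n} {x} {a b : ℝ} (hf : |f.1 x| ≤ a) (hg : |g.1 x| ≤ b) :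
    |(f * g).1 x| ≤ a * b := by
  change |f.1 x * g.1 x| ≤ _
  rw [abs_mul]
  exact mul_le_mul hf hg (abs_nonneg _) ((abs_nonneg _).trans hf)

theorem bd_add {f g : S n} {x} {a b : ℝ} (hf : |f.1 x| ≤ a) (hg : |g.1 x| ≤ b) :
    |(f + g).1 x| ≤ a + b := by
  change |f.1 x + g.1 x| ≤ _
  exact (abs_add_le _ _).trans (add_le_add hf hg)

theorem bd_neg {f : S n} {x} {a : ℝ} (hf : |f.1 x| ≤ a) :
    |(-f).1 x| ≤ a := by
  change |-f.1 x| ≤ _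
  rwa [abs_neg]

theorem bd_sub {f g : S n} {x} {a b : ℝ} (hf : |f.1 x| ≤ a) (hg : |g.1 x| ≤ b) :
    |(f - g).1 x| ≤ a + b := by
  rw [sub_eq_add_neg]
  exact bd_add hf (bd_neg hg)

theorem bd_sum {f : Fin n → S n} {x} {a : ℝ} (hf : ∀ i, |(f i).1 x| ≤ a) :
    |(∑ i, f i).1 x| ≤ n * a := by
  rw [coe_sum]
  refine (Finset.abs_sum_le_sum_abs _ _).trans ?_
  refine (Finset.sum_le_sum (fun i _ => hf i)).trans ?_
  simp

theorem bd_nat (m : ℕ) (x) : |((m : S n)).1 x| ≤ m := by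
  have : ((m : S n)).1 x = m := by
    have h : ((m : S n)).1 = (m : EuclideanSpace ℝ (Fin n) → ℝ) := map_natCast (S n).val m
    rw [h]; rfl
  rw [this]; simp

theorem bd_two (x) : |((2 : S n)).1 x| ≤ 2 := by simpa using bd_nat (n := n) 2 x

theorem bd_four (x) : |((4 : S n)).1 x| ≤ 4 := by simpa using bd_nat (n := n) 4 x

theorem coe_pow (f : S n) (m : ℕ) (x) : (f ^ m).1 x = f.1 x ^ m := rfl
theorem coe_mul (f g : S n) (x) : (f * g).1 x = f.1 x * g.1 x := rfl
theorem coe_add (f g : S n) (x) : (f + g).1 x = f.1 x + g.1 x := rfl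
theorem coe_sub (f g : S n) (x) : (f - g).1 x = f.1 x - g.1 x := rfl
theorem coe_neg (f : S n) (x) : (-f).1 x = -f.1 x := rfl
theorem coe_smul (c : ℝ) (f : S n) (x) : (c • f).1 x = c * f.1 x := rfl

/-- Good cutoff functions at scale `1 / r`. -/
structure Good (c r : ℝ) (ψ : S n) : Prop where
  rpos : 0 < r
  cs : ψ ∈ CS n
  nonneg : ∀ x, 0 ≤ ψ.1 x
  le_one : ∀ x, ψ.1 x ≤ 1
  d1 : ∀ i x, |(D i ψ).1 x| ≤ c * r
  d2 : ∀ i j x, |(D i (D j ψ)).1 x| ≤ c * r ^ 2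
  d3 : ∀ i j l x, |(D i (D j (D l ψ))).1 x| ≤ c * r ^ 3

/-- Weighted bound. -/
def P (ψ : S n) (r : ℝ) (m j : ℕ) (K : ℝ) (f : S n) : Prop :=
  ∀ x, |f.1 x| ≤ K * (ψ.1 x ^ m * r ^ j)

theorem P.mul {ψ : S n} {r : ℝ} {m j m' j' : ℕ} {K K' : ℝ} {f g : S n}
    (hf : P ψ r m j K f) (hg : P ψ r m' j' K' g) : P ψ r (m + m') (j + j') (K * K') (f * g) := by
  intro x
  refine (bd_mul (hf x) (hg x)).trans (le_of_eq ?_)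
  ring

theorem P.add {ψ : S n} {r : ℝ} {m j : ℕ} {K K' : ℝ} {f g : S n}
    (hf : P ψ r m j K f) (hg : P ψ r m j K' g) : P ψ r m j (K + K') (f + g) := by
  intro x
  refine (bd_add (hf x) (hg x)).trans (le_of_eq ?_)
  ring

theorem P.weak {c r : ℝ} {ψ : S n} (h : Good c r ψ) {m j m' : ℕ} {K : ℝ} (hK : 0 ≤ K) {f : S n}
    (hf : P ψ r m j K f) (hm : m' ≤ m) : P ψ r m' j K f := by
  intro x
  refine (hf x).trans ?_
  have := pow_le_pow_of_le_one (h.nonneg x) (h.le_one x) hm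
  have := h.rpos
  gcongr

theorem P_nat (ψ : S n) (r : ℝ) (m : ℕ) : P ψ r 0 0 m (m : S n) := by
  intro x
  simpa using bd_nat m x

theorem P_pow {c r : ℝ} {ψ : S n} (h : Good c r ψ) (m : ℕ) : P ψ r m 0 1 (ψ ^ m) := by
  intro x
  rw [coe_pow, abs_of_nonneg (pow_nonneg (h.nonneg x) _)]
  simp

theorem D_pow (i : Fin n) (ψ : S n) (m : ℕ) :
    D i (ψ ^ (m + 1)) = ((m + 1 : ℕ) : S n) * (ψ ^ m * D i ψ) := by
  rw [Derivation.leibniz_pow]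
  simp

theorem D_nat_mul (i : Fin n) (f : S n) (m : ℕ) :
    D i ((m : S n) * f) = (m : S n) * D i f := by
  rw [D_mul, (D i).map_natCast]; ring

theorem eta_bounds (k : ℕ) (c : ℝ) (hc : 0 ≤ c) : ∃ K : ℝ, 1 ≤ K ∧ ∀ (r : ℝ) (ψ : S n),
    Good c r ψ →
    (∀ i, P ψ r (k + 2) 1 K (D i (ψ ^ (k + 3)))) ∧
    (∀ i j, P ψ r (k + 1) 2 K (D i (D j (ψ ^ (k + 3))))) ∧
    (∀ i j l, P ψ r k 3 K (D i (D j (D l (ψ ^ (k + 3)))))) ∧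
    (∀ i, P ψ r (k + 1 + k) 1 K (D i (ψ ^ (k + 1) * ψ ^ (k + 1)))) ∧
    (∀ i, P ψ r (k + 2 + (k + 1)) 1 K (D i (ψ ^ (k + 2) * ψ ^ (k + 2)))) := by
  have key : ∀ m : ℕ, ∃ K : ℝ, 0 ≤ K ∧ ∀ (r : ℝ) (ψ : S n), Good c r ψ →
    (∀ i, P ψ r m 1 K (D i (ψ ^ (m + 1)))) := by
    intro m
    refine ⟨((m + 1 : ℕ) : ℝ) * (1 * c), by positivity, fun r ψ h i => ?_⟩
    have h1 : P ψ r 0 1 c (D i ψ) := fun x => by simpa using h.d1 i x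
    rw [D_pow]
    simpa only [zero_add, add_zero] using (P_nat ψ r (m + 1)).mul ((P_pow h m).mul h1)
  have key2 : ∀ m : ℕ, ∃ K : ℝ, 0 ≤ K ∧ ∀ (r : ℝ) (ψ : S n), Good c r ψ →
    (∀ i j, P ψ r m 2 K (D i (D j (ψ ^ (m + 2))))) := by
    intro m
    obtain ⟨K1, hK1, h1⟩ := key m
    refine ⟨((m + 1 + 1 : ℕ) : ℝ) * (1 * c + c * K1), by positivity, fun r ψ h i j => ?_⟩
    have hd1 : P ψ r 0 1 c (D j ψ) := fun x => by simpa using h.d1 j x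
    have hd2 : P ψ r 0 2 c (D i (D j ψ)) := fun x => by simpa using h.d2 i j x
    rw [show m + 2 = m + 1 + 1 from rfl, D_pow, D_nat_mul, D_mul]
    have a1 := ((P_pow h (m + 1)).mul hd2).weak h (by positivity) (m' := m) (by omega)
    have a2 := hd1.mul (h1 r ψ h i)
    simp only [zero_add, add_zero] at a1 a2
    simpa only [zero_add, add_zero] using (P_nat ψ r (m + 1 + 1)).mul (a1.add a2)
  have key3 : ∀ m : ℕ, ∃ K : ℝ, 0 ≤ K ∧ ∀ (r : ℝ) (ψ : S n), Good c r ψ →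
    (∀ i j l, P ψ r m 3 K (D i (D j (D l (ψ ^ (m + 3)))))) := by
    intro m
    obtain ⟨K1, hK1, h1⟩ := key (m + 1)
    obtain ⟨K2, hK2, h2⟩ := key2 m
    refine ⟨((m + 1 + 1 + 1 : ℕ) : ℝ) * ((1 * c + c * K1) + (c * K2 + K1 * c)), by positivity,
      fun r ψ h i j l => ?_⟩
    have hd1 : P ψ r 0 1 c (D l ψ) := fun x => by simpa using h.d1 l x
    have hd2 : P ψ r 0 2 c (D j (D l ψ)) := fun x => by simpa using h.d2 j l x
    have hd2' : P ψ r 0 2 c (D i (D l ψ)) := fun x => by simpa using h.d2 i l x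
    have hd3 : P ψ r 0 3 c (D i (D j (D l ψ))) := fun x => by simpa using h.d3 i j l x
    rw [show m + 3 = m + 1 + 1 + 1 from rfl, D_pow, D_nat_mul, D_nat_mul, D_mul, map_add, D_mul,
      D_mul]
    have a1 := ((P_pow h (m + 1 + 1)).mul hd3).weak h (by positivity) (m' := m) (by omega)
    have a2 := (hd2.mul (h1 r ψ h i)).weak h (by positivity) (m' := m) (by omega)
    have a3 := hd1.mul (h2 r ψ h i j)
    have a4 := ((h1 r ψ h j).mul hd2').weak h (by positivity) (m' := m) (by omega)
    simp only [zero_add, add_zero] at a1 a2 a3 a4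
    simpa only [zero_add, add_zero] using
      (P_nat ψ r (m + 1 + 1 + 1)).mul ((a1.add a2).add (a3.add a4))
  have key4 : ∀ m : ℕ, ∃ K : ℝ, 0 ≤ K ∧ ∀ (r : ℝ) (ψ : S n), Good c r ψ →
    (∀ i, P ψ r (m + 1 + m) 1 K (D i (ψ ^ (m + 1) * ψ ^ (m + 1)))) := by
    intro m
    obtain ⟨K1, hK1, h1⟩ := key m
    refine ⟨1 * K1 + 1 * K1, by positivity, fun r ψ h i => ?_⟩
    rw [D_mul]
    have a1 := (P_pow h (m + 1)).mul (h1 r ψ h i)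
    simp only [zero_add, add_zero] at a1
    exact a1.add a1
  obtain ⟨K1, hK1, h1⟩ := key (k + 2)
  obtain ⟨K2, hK2, h2⟩ := key2 (k + 1)
  obtain ⟨K3, hK3, h3⟩ := key3 k
  obtain ⟨K4, hK4, h4⟩ := key4 k
  obtain ⟨K5, hK5, h5⟩ := key4 (k + 1)
  have mono : ∀ {r : ℝ} {ψ : S n} {m j : ℕ} {K K' : ℝ} {f : S n}, Good c r ψ → K ≤ K' →
      P ψ r m j K f → P ψ r m j K' f := by
    intro r ψ m j K K' f h hK hf x
    refine (hf x).trans ?_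
    have := h.rpos
    have := h.nonneg x
    gcongr
  refine ⟨1 + K1 + K2 + K3 + K4 + K5, by linarith, fun r ψ h => ⟨fun i => ?_, fun i j => ?_,
    fun i j l => ?_, fun i => ?_, fun i => ?_⟩⟩
  · exact mono h (by linarith) (h1 r ψ h i)
  · exact mono h (by linarith) (h2 r ψ h i j)
  · exact mono h (by linarith) (h3 r ψ h i j l)
  · exact mono h (by linarith) (h4 r ψ h i)
  · exact mono h (by linarith) (h5 r ψ h i)


/-- weighted `u²` -/
def T0 (u ψ : S n) (r : ℝ) (k : ℕ) : S n := r ^ 6 • (ψ ^ k * u) ^ 2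
/-- weighted `|∇u|²` -/
def T1 (u ψ : S n) (r : ℝ) (k : ℕ) : S n := r ^ 4 • ∑ i, (ψ ^ (k + 1) * D i u) ^ 2
/-- weighted `|D²u|²` -/
def T2 (u ψ : S n) (r : ℝ) (k : ℕ) : S n := r ^ 2 • ∑ i, ∑ j, (ψ ^ (k + 2) * D i (D j u)) ^ 2
/-- weighted `|∇Δu|²` -/
def TB (u ψ : S n) (k : ℕ) : S n := ∑ i, (ψ ^ (k + 3) * D i (Lap u)) ^ 2
/-- weight -/
def w1 (ψ : S n) (r : ℝ) (k : ℕ) : S n := r ^ 4 • (ψ ^ (k + 1) * ψ ^ (k + 1))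
/-- weight -/
def w2 (ψ : S n) (r : ℝ) (k : ℕ) : S n := r ^ 2 • (ψ ^ (k + 2) * ψ ^ (k + 2))

theorem X_bd (u e : S n) (x) {U G H K h1 h2 h3 : ℝ} (bu : |u.1 x| ≤ U)
    (bG : ∀ i, |(D i u).1 x| ≤ G) (bH : ∀ i j, |(D i (D j u)).1 x| ≤ H)
    (bL : |(Lap u).1 x| ≤ n * H)
    (be1 : ∀ i, |(D i e).1 x| ≤ K * h1) (be2 : ∀ i j, |(D i (D j e)).1 x| ≤ K * h2)
    (beL : |(Lap e).1 x| ≤ n * (K * h2)) (bDL : ∀ l, |(D l (Lap e)).1 x| ≤ n * (K * h3))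
    (l : Fin n) : |(X u e l).1 x| ≤ 3 * n * K * (h1 * H) + 3 * n * K * (h2 * G)
      + n * K * (h3 * U) := by
  have t1 := bd_mul (be1 l) bL
  have t2 : |(2 * ∑ i, (D l (D i u) * D i e + D i u * D l (D i e))).1 x| ≤
      2 * (n * (H * (K * h1) + G * (K * h2))) :=
    bd_mul (bd_two x) (bd_sum fun i => bd_add (bd_mul (bH l i) (be1 i)) (bd_mul (bG i) (be2 l i)))
  have t3 := bd_mul (bG l) beL
  have t4 := bd_mul bu (bDL l)
  have := bd_add (bd_add (bd_add t1 t2) t3) t4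
  rw [X]
  refine this.trans (le_of_eq ?_)
  ring

theorem Z_bd (u e : S n) (x) {U G K h1 h2 : ℝ} (bu : |u.1 x| ≤ U)
    (bG : ∀ i, |(D i u).1 x| ≤ G)
    (be1 : ∀ i, |(D i e).1 x| ≤ K * h1) (be2 : ∀ i j, |(D i (D j e)).1 x| ≤ K * h2)
    (beL : |(Lap e).1 x| ≤ n * (K * h2))
    (l : Fin n) : |(Z u e l).1 x| ≤ 6 * n * K ^ 2 * (G * (h1 * h1) + U * (h1 * h2)) := by
  have t1 : |(4 * ∑ i, D i u * D i e * D l e).1 x| ≤ 4 * (n * (G * (K * h1) * (K * h1))) :=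
    bd_mul (bd_four x) (bd_sum fun i => bd_mul (bd_mul (bG i) (be1 i)) (be1 l))
  have t2 : |(2 * D l u * ∑ i, D i e * D i e).1 x| ≤ 2 * G * (n * (K * h1 * (K * h1))) :=
    bd_mul (bd_mul (bd_two x) (bG l)) (bd_sum fun i => bd_mul (be1 i) (be1 i))
  have t3 : |(4 * ∑ i, D i e * D l (D i e)).1 x| ≤ 4 * (n * (K * h1 * (K * h2))) :=
    bd_mul (bd_four x) (bd_sum fun i => bd_mul (be1 i) (be2 l i))
  have t4 := bd_mul (bd_mul (bd_two x) (be1 l)) beL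
  have := bd_sub (bd_sub (bd_neg t1) t2) (bd_mul bu (bd_add t4 t3))
  rw [Z]
  refine this.trans (le_of_eq ?_)
  ring

set_option maxHeartbeats 2000000 in
theorem point_bounds (k : ℕ) (c : ℝ) (hc : 0 ≤ c) : ∃ M : ℝ, 1 ≤ M ∧ ∀ (r : ℝ) (ψ u : S n),
    Good c r ψ → ∀ x, ∃ a0 a1 a2 : ℝ, 0 ≤ a0 ∧ 0 ≤ a1 ∧ 0 ≤ a2 ∧
      a0 ^ 2 = (T0 u ψ r k).1 x ∧ a1 ^ 2 = (T1 u ψ r k).1 x ∧ a2 ^ 2 = (T2 u ψ r k).1 x ∧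
      (∀ l, |(X u (ψ ^ (k + 3)) l).1 x| ≤ M * (a0 + a1 + a2)) ∧
      (∀ l, |(Z u (ψ ^ (k + 3)) l).1 x| ≤ ψ.1 x ^ (k + 3) * (M * (a0 + a1 + a2))) ∧
      |(∑ i, u * (D i (D i u) * w1 ψ r k + D i u * D i (w1 ψ r k))).1 x| ≤ M * (a0 * (a1 + a2)) ∧
      (∀ i, |(D i u * (D i (Lap u) * w2 ψ r k)).1 x| ≤
        |(ψ ^ (k + 3) * D i (Lap u)).1 x| * a1) ∧
      |(∑ i, ∑ j, D i u * (D j (D i u) * D j (w2 ψ r k))).1 x| ≤ M * (a1 * a2) := by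
  obtain ⟨K, hK1, hK⟩ := eta_bounds (n := n) k c hc
  have hK0 : 0 ≤ K := by linarith
  obtain ⟨M, hM⟩ : ∃ y : ℝ, y = 1 + 3 * n * K + 6 * n * K ^ 2 + n * (1 + K) + n * (n * K) :=
    ⟨_, rfl⟩
  refine ⟨M, ?_, ?_⟩
  · have : (0 : ℝ) ≤ 3 * n * K + 6 * n * K ^ 2 + n * (1 + K) + n * (n * K) := by positivity
    linarith
  intro r ψ u h x
  obtain ⟨e1, e2, e3, e4, e5⟩ := hK r ψ h
  have hr := h.rpos
  obtain ⟨t, ht⟩ : ∃ y : ℝ, y = ψ.1 x := ⟨_, rfl⟩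
  have ht0 : 0 ≤ t := ht ▸ h.nonneg x
  obtain ⟨U, hU⟩ : ∃ y : ℝ, y = |u.1 x| := ⟨_, rfl⟩
  obtain ⟨G, hG⟩ : ∃ y : ℝ, y = Real.sqrt (∑ i, (D i u).1 x ^ 2) := ⟨_, rfl⟩
  obtain ⟨H, hH⟩ : ∃ y : ℝ, y = Real.sqrt (∑ i, ∑ j, (D i (D j u)).1 x ^ 2) := ⟨_, rfl⟩
  have hU0 : 0 ≤ U := hU ▸ abs_nonneg _
  have hG0 : 0 ≤ G := hG ▸ Real.sqrt_nonneg _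
  have hH0 : 0 ≤ H := hH ▸ Real.sqrt_nonneg _
  have hGsq : G ^ 2 = ∑ i, (D i u).1 x ^ 2 := by
    rw [hG]
    exact Real.sq_sqrt (Finset.sum_nonneg fun i _ => sq_nonneg _)
  have hHsq : H ^ 2 = ∑ i, ∑ j, (D i (D j u)).1 x ^ 2 := by
    rw [hH]
    exact Real.sq_sqrt (Finset.sum_nonneg fun i _ => Finset.sum_nonneg fun j _ => sq_nonneg _)
  have bu : |u.1 x| ≤ U := hU.ge
  have bG : ∀ i, |(D i u).1 x| ≤ G := fun i => by
    rw [hG]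
    refine Real.abs_le_sqrt ?_
    exact Finset.single_le_sum (f := fun i => (D i u).1 x ^ 2) (fun i _ => sq_nonneg _)
      (Finset.mem_univ i)
  have bH : ∀ i j, |(D i (D j u)).1 x| ≤ H := fun i j => by
    rw [hH]
    refine Real.abs_le_sqrt ?_
    refine le_trans ?_ (Finset.single_le_sum (f := fun i => ∑ j, (D i (D j u)).1 x ^ 2)
      (fun i _ => Finset.sum_nonneg fun j _ => sq_nonneg _) (Finset.mem_univ i))
    exact Finset.single_le_sum (f := fun j => (D i (D j u)).1 x ^ 2) (fun i _ => sq_nonneg _)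
      (Finset.mem_univ j)
  have bL : |(Lap u).1 x| ≤ n * H := bd_sum fun i => bH i i
  obtain ⟨h0, hh0⟩ : ∃ y : ℝ, y = t ^ (k + 3) := ⟨_, rfl⟩
  obtain ⟨h1, hh1⟩ : ∃ y : ℝ, y = t ^ (k + 2) * r := ⟨_, rfl⟩
  obtain ⟨h2, hh2⟩ : ∃ y : ℝ, y = t ^ (k + 1) * r ^ 2 := ⟨_, rfl⟩
  obtain ⟨h3, hh3⟩ : ∃ y : ℝ, y = t ^ k * r ^ 3 := ⟨_, rfl⟩
  have p0 : 0 ≤ h0 := by rw [hh0]; positivity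
  have p1 : 0 ≤ h1 := by rw [hh1]; positivity
  have p2 : 0 ≤ h2 := by rw [hh2]; positivity
  have p3 : 0 ≤ h3 := by rw [hh3]; positivity
  have r1 : h1 * h1 = h0 * h2 := by simp only [hh0, hh1, hh2]; ring
  have r2 : h1 * h2 = h0 * h3 := by simp only [hh0, hh1, hh2, hh3]; ring
  have r3 : h2 * h2 = h1 * h3 := by simp only [hh1, hh2, hh3]; ring
  have be1 : ∀ i, |(D i (ψ ^ (k + 3))).1 x| ≤ K * h1 := fun i => by
    rw [hh1, ht]; simpa using e1 i x
  have be2 : ∀ i j, |(D i (D j (ψ ^ (k + 3)))).1 x| ≤ K * h2 := fun i j => by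
    rw [hh2, ht]; exact e2 i j x
  have be3 : ∀ i j l, |(D i (D j (D l (ψ ^ (k + 3))))).1 x| ≤ K * h3 := fun i j l => by
    rw [hh3, ht]; exact e3 i j l x
  have beL : |(Lap (ψ ^ (k + 3))).1 x| ≤ n * (K * h2) := bd_sum fun i => be2 i i
  have bDL : ∀ l, |(D l (Lap (ψ ^ (k + 3)))).1 x| ≤ n * (K * h3) := fun l => by
    rw [Lap, map_sum]
    exact bd_sum fun i => be3 l i i
  have bw1 : |(w1 ψ r k).1 x| ≤ h2 * h2 := by
    rw [w1, coe_smul, coe_mul, coe_pow, ← ht, abs_of_nonneg (by positivity)]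
    apply le_of_eq; simp only [hh2]; ring
  have bw2 : |(w2 ψ r k).1 x| ≤ h1 * h1 := by
    rw [w2, coe_smul, coe_mul, coe_pow, ← ht, abs_of_nonneg (by positivity)]
    apply le_of_eq; simp only [hh1]; ring
  have bDw1 : ∀ i, |(D i (w1 ψ r k)).1 x| ≤ K * (h2 * h3) := fun i => by
    rw [w1, Derivation.map_smul, coe_smul, abs_mul, abs_of_nonneg (by positivity : (0 : ℝ) ≤ r ^ 4)]
    refine (mul_le_mul_of_nonneg_left (e4 i x) (by positivity)).trans (le_of_eq ?_)
    simp only [hh2, hh3, ← ht]; ring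
  have bDw2 : ∀ i, |(D i (w2 ψ r k)).1 x| ≤ K * (h1 * h2) := fun i => by
    rw [w2, Derivation.map_smul, coe_smul, abs_mul, abs_of_nonneg (by positivity : (0 : ℝ) ≤ r ^ 2)]
    refine (mul_le_mul_of_nonneg_left (e5 i x) (by positivity)).trans (le_of_eq ?_)
    simp only [hh1, hh2, ← ht]; ring
  have hMX : 3 * n * K ≤ M := by
    have : (0 : ℝ) ≤ 6 * n * K ^ 2 + n * (1 + K) + n * (n * K) := by positivity
    linarith
  have hMZ : 6 * n * K ^ 2 ≤ M := by
    have : (0 : ℝ) ≤ 3 * n * K + n * (1 + K) + n * (n * K) := by positivity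
    linarith
  have hM1 : n * (1 + K) ≤ M := by
    have : (0 : ℝ) ≤ 3 * n * K + 6 * n * K ^ 2 + n * (n * K) := by positivity
    linarith
  have hM2 : n * (n * K) ≤ M := by
    have : (0 : ℝ) ≤ 3 * n * K + 6 * n * K ^ 2 + n * (1 + K) := by positivity
    linarith
  have hn0 : (0 : ℝ) ≤ n := Nat.cast_nonneg n
  refine ⟨h3 * U, h2 * G, h1 * H, by positivity, by positivity, by positivity,
    ?_, ?_, ?_, fun l => ?_, fun l => ?_, ?_, fun i => ?_, ?_⟩
  · rw [T0, coe_smul, coe_pow, coe_mul, coe_pow, mul_pow, hU, sq_abs, ← ht, hh3]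
    ring
  · rw [T1, coe_smul, coe_sum, mul_pow, hGsq, Finset.mul_sum, Finset.mul_sum]
    refine Finset.sum_congr rfl fun i _ => ?_
    rw [coe_pow, coe_mul, coe_pow, ← ht, hh2]
    ring
  · rw [T2, coe_smul, coe_sum, mul_pow, hHsq, Finset.mul_sum, Finset.mul_sum]
    refine Finset.sum_congr rfl fun i _ => ?_
    rw [coe_sum, Finset.mul_sum, Finset.mul_sum]
    refine Finset.sum_congr rfl fun j _ => ?_
    rw [coe_pow, coe_mul, coe_pow, ← ht, hh1]
    ring
  · refine (X_bd u (ψ ^ (k + 3)) x bu bG bH bL be1 be2 beL bDL l).trans ?_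
    refine le_trans ?_ (mul_le_mul_of_nonneg_right hMX (by positivity))
    have : 0 ≤ n * K * (h3 * U) := by positivity
    linarith
  · rw [← ht, ← hh0]
    refine (Z_bd u (ψ ^ (k + 3)) x bu bG be1 be2 beL l).trans ?_
    refine le_trans ?_ (mul_le_mul_of_nonneg_left
      (mul_le_mul_of_nonneg_right hMZ (by positivity)) p0)
    have : 0 ≤ h0 * (6 * n * K ^ 2 * (h1 * H)) := by positivity
    rw [r1, r2]
    linarith
  · refine (bd_sum fun i => bd_mul bu (bd_add (bd_mul (bH i i) bw1)
      (bd_mul (bG i) (bDw1 i)))).trans ?_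
    refine le_trans ?_ (mul_le_mul_of_nonneg_right hM1 (by positivity))
    rw [r3]
    have : 0 ≤ n * K * (h3 * U * (h1 * H)) := by positivity
    have : 0 ≤ n * (h3 * U * (h2 * G)) := by positivity
    linarith
  · refine (bd_mul (bG i) (bd_mul le_rfl bw2)).trans ?_
    rw [r1, coe_mul, abs_mul, coe_pow, ← ht, ← hh0, abs_of_nonneg p0]
    apply le_of_eq; ring
  · refine (bd_sum fun i => bd_sum fun j => bd_mul (bG i) (bd_mul (bH j i) (bDw2 j))).trans ?_
    refine le_trans ?_ (mul_le_mul_of_nonneg_right hM2 (by positivity))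
    apply le_of_eq; ring


theorem smul_mem (c : ℝ) {f : S n} (hf : f ∈ CS n) : c • f ∈ CS n := by
  rw [Algebra.smul_def]
  exact Ideal.mul_mem_left _ _ hf

theorem I_smul (c : ℝ) (f : S n) : I (c • f) = c * I f := integral_const_mul _ _

theorem I_abs_le {f g : S n} (hf : f ∈ CS n) (hg : g ∈ CS n) (h : ∀ x, |f.1 x| ≤ g.1 x) :
    |I f| ≤ I g := by
  rw [abs_le]
  constructor
  · rw [← I_neg]
    exact I_mono (neg_mem hg) hf fun x => (abs_le.1 (h x)).1
  · exact I_mono hf hg fun x => (abs_le.1 (h x)).2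

theorem I_nonneg {f : S n} (h : ∀ x, 0 ≤ f.1 x) : 0 ≤ I f := integral_nonneg h

theorem psi_mem {c r : ℝ} {ψ : S n} (h : Good c r ψ) {m : ℕ} (hm : 0 < m) : ψ ^ m ∈ CS n :=
  Ideal.pow_mem_of_mem _ h.cs _ hm

theorem sq_mem {f : S n} (hf : f ∈ CS n) : f ^ 2 ∈ CS n := Ideal.pow_mem_of_mem _ hf _ (by simp)


theorem T1_mem {c r : ℝ} {ψ : S n} (h : Good c r ψ) (u : S n) {k : ℕ} : T1 u ψ r k ∈ CS n :=
  smul_mem _ (Submodule.sum_mem _ fun _ _ => sq_mem (Ideal.mul_mem_right _ _ (psi_mem h (by simp))))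
theorem T2_mem {c r : ℝ} {ψ : S n} (h : Good c r ψ) (u : S n) {k : ℕ} : T2 u ψ r k ∈ CS n :=
  smul_mem _ (Submodule.sum_mem _ fun _ _ => Submodule.sum_mem _ fun _ _ =>
    sq_mem (Ideal.mul_mem_right _ _ (psi_mem h (by simp))))
theorem TB_mem {c r : ℝ} {ψ : S n} (h : Good c r ψ) (u : S n) {k : ℕ} : TB u ψ k ∈ CS n :=
  Submodule.sum_mem _ fun _ _ => sq_mem (Ideal.mul_mem_right _ _ (psi_mem h (by simp)))
theorem w1_mem {c r : ℝ} {ψ : S n} (h : Good c r ψ) {k : ℕ} : w1 ψ r k ∈ CS n :=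
  smul_mem _ (Ideal.mul_mem_right _ _ (psi_mem h (by simp)))
theorem w2_mem {c r : ℝ} {ψ : S n} (h : Good c r ψ) {k : ℕ} : w2 ψ r k ∈ CS n :=
  smul_mem _ (Ideal.mul_mem_right _ _ (psi_mem h (by simp)))

theorem T0_mem {c r : ℝ} {ψ : S n} (h : Good c r ψ) (u : S n) {k : ℕ} (hk : 0 < k) : T0 u ψ r k ∈ CS n :=
  smul_mem _ (sq_mem (Ideal.mul_mem_right _ _ (psi_mem h hk)))

theorem young_sum (b y : Fin n → ℝ) (q e : ℝ) (he : 0 < e)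
    (h : ∀ i, |y i| ≤ |b i| * q) :
    |∑ i, y i| ≤ e * ∑ i, b i ^ 2 + n * (q ^ 2 / (4 * e)) := by
  refine (Finset.abs_sum_le_sum_abs _ _).trans ?_
  have : ∀ i, |y i| ≤ e * b i ^ 2 + q ^ 2 / (4 * e) := fun i => by
    refine (h i).trans ?_
    have h1 : 0 ≤ (2 * e * |b i| - q) ^ 2 / (4 * e) := by positivity
    have h2 : (2 * e * |b i| - q) ^ 2 / (4 * e) = e * |b i| ^ 2 - |b i| * q + q ^ 2 / (4 * e) := by
      field_simp
      ring
    rw [sq_abs] at h2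
    linarith
  refine (Finset.sum_le_sum fun i _ => this i).trans (le_of_eq ?_)
  rw [Finset.sum_add_distrib, Finset.mul_sum]
  simp

theorem young_two (M a b e : ℝ) (he : 0 < e) : M * (a * b) ≤ e * b ^ 2 + M ^ 2 / (4 * e) * a ^ 2 := by
  have h1 : 0 ≤ (2 * e * b - M * a) ^ 2 / (4 * e) := by positivity
  have h2 : (2 * e * b - M * a) ^ 2 / (4 * e) = e * b ^ 2 - M * (a * b) + M ^ 2 / (4 * e) * a ^ 2 := by
    field_simp
    ring
  linarith

theorem sq3 (a b c : ℝ) : (a + b + c) ^ 2 ≤ 3 * (a ^ 2 + b ^ 2 + c ^ 2) := by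
  nlinarith [sq_nonneg (a - b), sq_nonneg (a - c), sq_nonneg (b - c)]

theorem TB_coe (u ψ : S n) (k : ℕ) (x) :
    (TB u ψ k).1 x = ∑ i, ((ψ ^ (k + 3) * D i (Lap u)).1 x) ^ 2 := by
  rw [TB, coe_sum]; rfl

theorem T0_nonneg (u ψ : S n) (r : ℝ) (k : ℕ) (x) : 0 ≤ (T0 u ψ r k).1 x := by
  rw [T0, coe_smul, coe_pow]; positivity
theorem T1_nonneg (u ψ : S n) (r : ℝ) (k : ℕ) (x) : 0 ≤ (T1 u ψ r k).1 x := by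
  rw [T1, coe_smul, coe_sum]
  exact mul_nonneg (by positivity) (Finset.sum_nonneg fun i _ => by rw [coe_pow]; positivity)
theorem T2_nonneg (u ψ : S n) (r : ℝ) (k : ℕ) (x) : 0 ≤ (T2 u ψ r k).1 x := by
  rw [T2, coe_smul, coe_sum]
  exact mul_nonneg (by positivity) (Finset.sum_nonneg fun i _ => by
    rw [coe_sum]; exact Finset.sum_nonneg fun i _ => by rw [coe_pow]; positivity)
theorem TB_nonneg (u ψ : S n) (k : ℕ) (x) : 0 ≤ (TB u ψ k).1 x := by
  rw [TB_coe]; positivity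

theorem int_T1 {c r : ℝ} {ψ : S n} (h : Good c r ψ) (u : S n) (k : ℕ) :
    I (T1 u ψ r k) = - I (∑ i, u * (D i (D i u) * w1 ψ r k + D i u * D i (w1 ψ r k))) := by
  have hw := w1_mem h (k := k)
  have e1 : T1 u ψ r k = ∑ i, D i u * (D i u * w1 ψ r k) := by
    rw [T1, w1, Finset.smul_sum]
    refine Finset.sum_congr rfl fun i _ => ?_
    simp only [Algebra.smul_def]
    ring
  rw [e1, I_sum _ fun i => Ideal.mul_mem_left _ _ (Ideal.mul_mem_left _ _ hw),
    I_sum _ fun i => Ideal.mul_mem_left _ _ (add_mem (Ideal.mul_mem_left _ _ hw)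
      (Ideal.mul_mem_left _ _ (D_mem i hw))), ← Finset.sum_neg_distrib]
  refine Finset.sum_congr rfl fun i _ => ?_
  rw [I_ibp _ _ (Ideal.mul_mem_left _ _ hw), D_mul]
  congr 2
  ring

theorem int_T2 {c r : ℝ} {ψ : S n} (h : Good c r ψ) (u : S n) (k : ℕ) :
    I (T2 u ψ r k) = - I (∑ i, D i u * (D i (Lap u) * w2 ψ r k))
      - I (∑ i, ∑ j, D i u * (D j (D i u) * D j (w2 ψ r k))) := by
  have hw := w2_mem h (k := k)
  have e1 : T2 u ψ r k = ∑ i, ∑ j, D j (D i u) * (D j (D i u) * w2 ψ r k) := by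
    rw [T2, w2, Finset.smul_sum]
    refine Finset.sum_congr rfl fun i _ => ?_
    rw [Finset.smul_sum]
    refine Finset.sum_congr rfl fun j _ => ?_
    rw [D_comm i j]
    simp only [Algebra.smul_def]
    ring
  have e2 : ∀ i, D i u * (D i (Lap u) * w2 ψ r k)
      = ∑ j, D i u * (D j (D j (D i u)) * w2 ψ r k) := fun i => by
    rw [Lap, map_sum, Finset.sum_mul, Finset.mul_sum]
    refine Finset.sum_congr rfl fun j _ => ?_
    rw [D_comm i j, D_comm i j]
  have m1 : ∀ i j, D i u * (D j (D j (D i u)) * w2 ψ r k) ∈ CS n := fun i j =>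
    Ideal.mul_mem_left _ _ (Ideal.mul_mem_left _ _ hw)
  have m2 : ∀ i j, D i u * (D j (D i u) * D j (w2 ψ r k)) ∈ CS n := fun i j =>
    Ideal.mul_mem_left _ _ (Ideal.mul_mem_left _ _ (D_mem j hw))
  have m3 : ∀ i j, D j (D i u) * (D j (D i u) * w2 ψ r k) ∈ CS n := fun i j =>
    Ideal.mul_mem_left _ _ (Ideal.mul_mem_left _ _ hw)
  rw [e1, Finset.sum_congr rfl fun i _ => e2 i,
    I_sum _ fun i => Submodule.sum_mem _ fun j _ => m1 i j,
    I_sum _ fun i => Submodule.sum_mem _ fun j _ => m2 i j,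
    I_sum _ fun i => Submodule.sum_mem _ fun j _ => m3 i j,
    ← Finset.sum_neg_distrib, ← Finset.sum_sub_distrib]
  refine Finset.sum_congr rfl fun i _ => ?_
  rw [I_sum _ (m1 i), I_sum _ (m2 i), I_sum _ (m3 i),
    ← Finset.sum_neg_distrib, ← Finset.sum_sub_distrib]
  refine Finset.sum_congr rfl fun j _ => ?_
  rw [I_ibp _ _ (Ideal.mul_mem_left _ _ hw), D_mul, neg_sub_left, ← I_add (m2 i j) (m1 i j)]
  congr 2
  ring

theorem est_T1 {k : ℕ} (hk : 0 < k) {c : ℝ} (hc : 0 ≤ c) {d : ℝ} (hd : 0 < d) :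
    ∃ K : ℝ, 0 ≤ K ∧ ∀ (r : ℝ) (ψ u : S n), Good c r ψ →
      I (T1 u ψ r k) ≤ d * (I (T1 u ψ r k) + I (T2 u ψ r k)) + K * I (T0 u ψ r k) := by
  obtain ⟨M, hM, hb⟩ := point_bounds (n := n) k c hc
  refine ⟨M ^ 2 / (4 * d) + M ^ 2 / (4 * d), by positivity, fun r ψ u h => ?_⟩
  have hw := w1_mem h (k := k)
  have m0 := T0_mem h u hk
  have m1 := T1_mem h u (k := k)
  have m2 := T2_mem h u (k := k)
  have : |I (∑ i, u * (D i (D i u) * w1 ψ r k + D i u * D i (w1 ψ r k)))| ≤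
      I (d • (T1 u ψ r k + T2 u ψ r k) + (M ^ 2 / (4 * d) + M ^ 2 / (4 * d)) • T0 u ψ r k) := by
    refine I_abs_le (Submodule.sum_mem _ fun i _ => Ideal.mul_mem_left _ _
      (add_mem (Ideal.mul_mem_left _ _ hw) (Ideal.mul_mem_left _ _ (D_mem i hw))))
      (add_mem (smul_mem _ (add_mem m1 m2)) (smul_mem _ m0)) fun x => ?_
    obtain ⟨a0, a1, a2, -, -, -, q0, q1, q2, -, -, h1, -, -⟩ := hb r ψ u h x
    refine h1.trans ?_
    rw [coe_add, coe_smul, coe_smul, coe_add, ← q0, ← q1, ← q2]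
    have := young_two M a0 a1 d hd
    have := young_two M a0 a2 d hd
    linarith
  rw [I_add (smul_mem _ (add_mem m1 m2)) (smul_mem _ m0), I_smul, I_smul, I_add m1 m2] at this
  have h2 := int_T1 h u k
  have h3 := neg_abs_le (I (∑ i, u * (D i (D i u) * w1 ψ r k + D i u * D i (w1 ψ r k))))
  linarith

theorem est_T2 {k : ℕ} {c : ℝ} (hc : 0 ≤ c) {d : ℝ} (hd : 0 < d) :
    ∃ K : ℝ, 0 ≤ K ∧ ∀ (r : ℝ) (ψ u : S n), Good c r ψ →
      I (T2 u ψ r k) ≤ d * (I (TB u ψ k) + I (T2 u ψ r k)) + K * I (T1 u ψ r k) := by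
  obtain ⟨M, hM, hb⟩ := point_bounds (n := n) k c hc
  refine ⟨n / (4 * d) + M ^ 2 / (4 * d), by positivity, fun r ψ u h => ?_⟩
  have hw := w2_mem h (k := k)
  have mB := TB_mem h u (k := k)
  have m1 := T1_mem h u (k := k)
  have m2 := T2_mem h u (k := k)
  have t1 : |I (∑ i, D i u * (D i (Lap u) * w2 ψ r k))| ≤
      I (d • TB u ψ k + (n / (4 * d)) • T1 u ψ r k) := by
    refine I_abs_le (Submodule.sum_mem _ fun i _ => Ideal.mul_mem_left _ _
      (Ideal.mul_mem_left _ _ hw)) (add_mem (smul_mem _ mB) (smul_mem _ m1)) fun x => ?_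
    obtain ⟨a0, a1, a2, -, -, -, q0, q1, q2, -, -, -, h1, -⟩ := hb r ψ u h x
    rw [coe_add, coe_smul, coe_smul, ← q1, coe_sum, TB_coe]
    refine (young_sum _ _ a1 d hd h1).trans (le_of_eq ?_)
    ring
  have t2 : |I (∑ i, ∑ j, D i u * (D j (D i u) * D j (w2 ψ r k)))| ≤
      I (d • T2 u ψ r k + (M ^ 2 / (4 * d)) • T1 u ψ r k) := by
    refine I_abs_le (Submodule.sum_mem _ fun i _ => Submodule.sum_mem _ fun j _ =>
      Ideal.mul_mem_left _ _ (Ideal.mul_mem_left _ _ (D_mem j hw)))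
      (add_mem (smul_mem _ m2) (smul_mem _ m1)) fun x => ?_
    obtain ⟨a0, a1, a2, -, -, -, q0, q1, q2, -, -, -, -, h1⟩ := hb r ψ u h x
    refine h1.trans ?_
    rw [coe_add, coe_smul, coe_smul, ← q1, ← q2]
    exact young_two M a1 a2 d hd
  rw [I_add (smul_mem _ mB) (smul_mem _ m1), I_smul, I_smul] at t1
  rw [I_add (smul_mem _ m2) (smul_mem _ m1), I_smul, I_smul] at t2
  have h2 := int_T2 h u k
  have h3 := neg_abs_le (I (∑ i, D i u * (D i (Lap u) * w2 ψ r k)))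
  have h4 := neg_abs_le (I (∑ i, ∑ j, D i u * (D j (D i u) * D j (w2 ψ r k))))
  linarith

theorem est_cross {k : ℕ} (hk : 0 < k) {c : ℝ} (hc : 0 ≤ c) {d : ℝ} (hd : 0 < d) :
    ∃ K : ℝ, 0 ≤ K ∧ ∀ (r : ℝ) (ψ u : S n), Good c r ψ →
      |I (∑ i, D i (Lap u) * (ψ ^ (k + 3) * X u (ψ ^ (k + 3)) i))| ≤
        d * I (TB u ψ k) + K * (I (T0 u ψ r k) + I (T1 u ψ r k) + I (T2 u ψ r k)) ∧
      |I (∑ i, D i (Lap u) * Z u (ψ ^ (k + 3)) i)| ≤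
        d * I (TB u ψ k) + K * (I (T0 u ψ r k) + I (T1 u ψ r k) + I (T2 u ψ r k)) ∧
      I (∑ i, X u (ψ ^ (k + 3)) i ^ 2) ≤
        K * (I (T0 u ψ r k) + I (T1 u ψ r k) + I (T2 u ψ r k)) := by
  obtain ⟨M, hM, hb⟩ := point_bounds (n := n) k c hc
  obtain ⟨K, hKd⟩ : ∃ K : ℝ, K = n * (M ^ 2 * 3 / (4 * d)) + n * (M ^ 2 * 3) := ⟨_, rfl⟩
  have hn1 : (0 : ℝ) ≤ n * (M ^ 2 * 3 / (4 * d)) := by positivity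
  have hn2 : (0 : ℝ) ≤ n * (M ^ 2 * 3) := by positivity
  refine ⟨K, by linarith, fun r ψ u h => ?_⟩
  have mB := TB_mem h u (k := k)
  have m0 := T0_mem h u hk
  have m1 := T1_mem h u (k := k)
  have m2 := T2_mem h u (k := k)
  have mQ := add_mem (add_mem m0 m1) m2
  have eQ : I (T0 u ψ r k + T1 u ψ r k + T2 u ψ r k) =
      I (T0 u ψ r k) + I (T1 u ψ r k) + I (T2 u ψ r k) := by
    rw [I_add (add_mem m0 m1) m2, I_add m0 m1]
  have eBQ : I (d • TB u ψ k + K • (T0 u ψ r k + T1 u ψ r k + T2 u ψ r k)) =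
      d * I (TB u ψ k) + K * (I (T0 u ψ r k) + I (T1 u ψ r k) + I (T2 u ψ r k)) := by
    rw [I_add (smul_mem _ mB) (smul_mem _ mQ), I_smul, I_smul, eQ]
  have me : ψ ^ (k + 3) ∈ CS n := psi_mem h (by simp)
  have meD : ∀ i, D i (ψ ^ (k + 3)) ∈ CS n := fun i => D_mem i me
  have meL : Lap (ψ ^ (k + 3)) ∈ CS n := Lap_mem me
  have mX : ∀ i, X u (ψ ^ (k + 3)) i ∈ CS n := fun i => by
    rw [X]
    refine add_mem (add_mem (add_mem ?_ ?_) ?_) ?_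
    · exact Ideal.mul_mem_right _ _ (meD i)
    · exact Ideal.mul_mem_left _ _ (Submodule.sum_mem _ fun j _ =>
        add_mem (Ideal.mul_mem_left _ _ (meD j)) (Ideal.mul_mem_left _ _ (D_mem i (meD j))))
    · exact Ideal.mul_mem_left _ _ meL
    · exact Ideal.mul_mem_left _ _ (D_mem i meL)
  have mZ : ∀ i, Z u (ψ ^ (k + 3)) i ∈ CS n := fun i => by
    have := X_sq u (ψ ^ (k + 3)) i
    rw [Z]
    refine sub_mem (sub_mem (neg_mem ?_) ?_) ?_
    · exact Ideal.mul_mem_left _ _ (Submodule.sum_mem _ fun j _ => Ideal.mul_mem_left _ _ (meD i))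
    · exact Ideal.mul_mem_left _ _ (Submodule.sum_mem _ fun j _ => Ideal.mul_mem_left _ _ (meD j))
    · exact Ideal.mul_mem_left _ _ (add_mem (Ideal.mul_mem_left _ _ meL)
        (Ideal.mul_mem_left _ _ (Submodule.sum_mem _ fun j _ =>
          Ideal.mul_mem_left _ _ (D_mem i (meD j)))))
  have fin : ∀ x, ∀ y : Fin n → ℝ, ∀ a0 a1 a2 : ℝ, a0 ^ 2 = (T0 u ψ r k).1 x →
      a1 ^ 2 = (T1 u ψ r k).1 x → a2 ^ 2 = (T2 u ψ r k).1 x →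
      (∀ i, |y i| ≤ |(ψ ^ (k + 3) * D i (Lap u)).1 x| * (M * (a0 + a1 + a2))) →
      |∑ i, y i| ≤ (d • TB u ψ k + K • (T0 u ψ r k + T1 u ψ r k + T2 u ψ r k)).1 x := by
    intro x y a0 a1 a2 q0 q1 q2 hy
    rw [coe_add, coe_smul, coe_smul, coe_add, coe_add, ← q0, ← q1, ← q2, TB_coe]
    refine (young_sum _ _ _ d hd hy).trans ?_
    have s3 := sq3 a0 a1 a2
    have h1 : n * ((M * (a0 + a1 + a2)) ^ 2 / (4 * d)) =
        n * (M ^ 2 / (4 * d)) * (a0 + a1 + a2) ^ 2 := by ring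
    have h2 := mul_le_mul_of_nonneg_left s3 (by positivity : 0 ≤ n * (M ^ 2 / (4 * d)))
    have h3 : n * (M ^ 2 / (4 * d)) * (3 * (a0 ^ 2 + a1 ^ 2 + a2 ^ 2)) =
      n * (M ^ 2 * 3 / (4 * d)) * (a0 ^ 2 + a1 ^ 2 + a2 ^ 2) := by ring
    have h4 : 0 ≤ n * (M ^ 2 * 3) * (a0 ^ 2 + a1 ^ 2 + a2 ^ 2) := by positivity
    rw [hKd, add_mul]
    linarith
  refine ⟨?_, ?_, ?_⟩
  · rw [← eBQ]
    refine I_abs_le (Submodule.sum_mem _ fun i _ => Ideal.mul_mem_left _ _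
      (Ideal.mul_mem_left _ _ (mX i))) (add_mem (smul_mem _ mB) (smul_mem _ mQ)) fun x => ?_
    obtain ⟨a0, a1, a2, -, -, -, q0, q1, q2, hX, -⟩ := hb r ψ u h x
    rw [coe_sum]
    refine fin x _ a0 a1 a2 q0 q1 q2 fun i => ?_
    rw [← mul_assoc, mul_comm (D i (Lap u))]
    exact bd_mul le_rfl (hX i)
  · rw [← eBQ]
    refine I_abs_le (Submodule.sum_mem _ fun i _ => Ideal.mul_mem_left _ _
      (mZ i)) (add_mem (smul_mem _ mB) (smul_mem _ mQ)) fun x => ?_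
    obtain ⟨a0, a1, a2, -, -, -, q0, q1, q2, -, hZ, -⟩ := hb r ψ u h x
    rw [coe_sum]
    refine fin x _ a0 a1 a2 q0 q1 q2 fun i => ?_
    refine (bd_mul le_rfl (hZ i)).trans (le_of_eq ?_)
    rw [coe_mul (ψ ^ (k + 3)), abs_mul, coe_pow, abs_of_nonneg (pow_nonneg (h.nonneg x) (k + 3))]
    ring
  · rw [← eQ, ← I_smul]
    refine I_mono (Submodule.sum_mem _ fun i _ => sq_mem (mX i)) (smul_mem _ mQ) fun x => ?_
    obtain ⟨a0, a1, a2, p0, p1, p2, q0, q1, q2, hX, -⟩ := hb r ψ u h x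
    rw [coe_sum, coe_smul, coe_add, coe_add, ← q0, ← q1, ← q2]
    have : ∀ i, (X u (ψ ^ (k + 3)) i ^ 2).1 x ≤ M ^ 2 * 3 * (a0 ^ 2 + a1 ^ 2 + a2 ^ 2) := by
      intro i
      rw [coe_pow, ← sq_abs]
      refine (pow_le_pow_left₀ (abs_nonneg _) (hX i) 2).trans ?_
      rw [mul_pow, mul_assoc]
      exact mul_le_mul_of_nonneg_left (sq3 _ _ _) (by positivity)
    refine (Finset.sum_le_sum fun i _ => this i).trans ?_
    have h4 : 0 ≤ n * (M ^ 2 * 3 / (4 * d)) * (a0 ^ 2 + a1 ^ 2 + a2 ^ 2) := by positivity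
    rw [hKd, add_mul]
    simp only [Finset.sum_const, Finset.card_univ, Fintype.card_fin, nsmul_eq_mul]
    linarith


set_option maxHeartbeats 2000000 in
theorem energy {k : ℕ} (hk : 0 < k) {c : ℝ} (hc : 0 ≤ c) {p : ℝ} (hp : 1 < p) :
    ∃ C : ℝ, 0 ≤ C ∧ ∀ (r : ℝ) (ψ u : S n), Good c r ψ →
      0 ≤ I (-(Lap (Lap (Lap u))) * (u * (ψ ^ (k + 3) * ψ ^ (k + 3)))) →
      p * I (-(Lap (Lap (Lap u))) * (u * (ψ ^ (k + 3) * ψ ^ (k + 3)))) ≤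
        I (∑ i, D i (Lap (u * ψ ^ (k + 3))) ^ 2) →
      I (-(Lap (Lap (Lap u))) * (u * (ψ ^ (k + 3) * ψ ^ (k + 3)))) + I (TB u ψ k) ≤
        C * I (T0 u ψ r k) := by
  obtain ⟨q, hq⟩ : ∃ q : ℝ, q = p - 1 := ⟨_, rfl⟩
  have hq0 : 0 < q := by linarith
  obtain ⟨d, hd0, hd1, hd2⟩ : ∃ d : ℝ, 0 < d ∧ d ≤ 1 / 6 ∧ d ≤ q / 4 :=
    ⟨min (1 / 6) (q / 4), by positivity, min_le_left _ _, min_le_right _ _⟩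
  obtain ⟨K1, hK1, H1⟩ := est_cross (n := n) hk hc hd0
  obtain ⟨L, hL⟩ : ∃ L : ℝ, L = (18 / q + 6) * K1 := ⟨_, rfl⟩
  have hL0 : 0 ≤ L := by rw [hL]; positivity
  obtain ⟨d2, hd2d⟩ : ∃ d2 : ℝ, d2 = 1 / (8 * (L + 1)) := ⟨_, rfl⟩
  have hd20 : 0 < d2 := by rw [hd2d]; positivity
  have hd2L : 8 * d2 * (L + 1) = 1 := by rw [hd2d]; field_simp
  obtain ⟨K2, hK2, H2⟩ := est_T2 (n := n) (k := k) hc hd20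
  obtain ⟨d3, hd3d⟩ : ∃ d3 : ℝ, d3 = 1 / (8 * (K2 + 1)) := ⟨_, rfl⟩
  have hd30 : 0 < d3 := by rw [hd3d]; positivity
  have hd3K : 8 * d3 * (K2 + 1) = 1 := by rw [hd3d]; field_simp
  obtain ⟨K3, hK3, H3⟩ := est_T1 (n := n) hk hc hd30
  refine ⟨2 * (L * (1 + (2 * K2 + 1) * (4 * K3))), by positivity, fun r ψ u h hA0 hst => ?_⟩
  obtain ⟨hP, hW, hX⟩ := H1 r ψ u h
  have h2 := H2 r ψ u h
  have h3 := H3 r ψ u h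
  have hD0 : 0 ≤ I (T0 u ψ r k) := I_nonneg (T0_nonneg u ψ r k)
  have hD1 : 0 ≤ I (T1 u ψ r k) := I_nonneg (T1_nonneg u ψ r k)
  have hD2 : 0 ≤ I (T2 u ψ r k) := I_nonneg (T2_nonneg u ψ r k)
  have hB0 : 0 ≤ I (TB u ψ k) := I_nonneg (TB_nonneg u ψ k)
  have me : ψ ^ (k + 3) ∈ CS n := psi_mem h (by simp)
  have mB := TB_mem h u (k := k)
  have mg : u * (ψ ^ (k + 3) * ψ ^ (k + 3)) ∈ CS n :=
    Ideal.mul_mem_left _ _ (Ideal.mul_mem_left _ _ me)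
  have mue : u * ψ ^ (k + 3) ∈ CS n := Ideal.mul_mem_left _ _ me
  have mX : ∀ i, X u (ψ ^ (k + 3)) i ∈ CS n := fun i => by
    have e := D_Lap_mul u (ψ ^ (k + 3)) i
    rw [show X u (ψ ^ (k + 3)) i = D i (Lap (u * ψ ^ (k + 3))) - ψ ^ (k + 3) * D i (Lap u) by
      rw [e]; ring]
    exact sub_mem (D_mem i (Lap_mem mue)) (Ideal.mul_mem_right _ _ me)
  have mX2 : ∀ i, X u (ψ ^ (k + 3) * ψ ^ (k + 3)) i ∈ CS n := fun i => by
    have e := D_Lap_mul u (ψ ^ (k + 3) * ψ ^ (k + 3)) i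
    rw [show X u (ψ ^ (k + 3) * ψ ^ (k + 3)) i = D i (Lap (u * (ψ ^ (k + 3) * ψ ^ (k + 3)))) -
      (ψ ^ (k + 3) * ψ ^ (k + 3)) * D i (Lap u) by rw [e]; ring]
    exact sub_mem (D_mem i (Lap_mem mg)) (Ideal.mul_mem_right _ _ (Ideal.mul_mem_right _ _ me))
  have mZ : ∀ i, Z u (ψ ^ (k + 3)) i ∈ CS n := fun i => by
    have e := X_sq u (ψ ^ (k + 3)) i
    rw [show Z u (ψ ^ (k + 3)) i = 2 * ψ ^ (k + 3) * X u (ψ ^ (k + 3)) i -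
      X u (ψ ^ (k + 3) * ψ ^ (k + 3)) i by rw [e]; ring]
    exact sub_mem (Ideal.mul_mem_left _ _ (mX i)) (mX2 i)
  have mP : ∑ i, D i (Lap u) * (ψ ^ (k + 3) * X u (ψ ^ (k + 3)) i) ∈ CS n :=
    Submodule.sum_mem _ fun i _ => Ideal.mul_mem_left _ _ (Ideal.mul_mem_left _ _ (mX i))
  have mW : ∑ i, D i (Lap u) * Z u (ψ ^ (k + 3)) i ∈ CS n :=
    Submodule.sum_mem _ fun i _ => Ideal.mul_mem_left _ _ (mZ i)
  have mXX : ∑ i, X u (ψ ^ (k + 3)) i ^ 2 ∈ CS n :=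
    Submodule.sum_mem _ fun i _ => sq_mem (mX i)
  have eA : I (-(Lap (Lap (Lap u))) * (u * (ψ ^ (k + 3) * ψ ^ (k + 3)))) =
      I (TB u ψ k) + (I (∑ i, D i (Lap u) * (ψ ^ (k + 3) * X u (ψ ^ (k + 3)) i)) +
      I (∑ i, D i (Lap u) * (ψ ^ (k + 3) * X u (ψ ^ (k + 3)) i))) -
      I (∑ i, D i (Lap u) * Z u (ψ ^ (k + 3)) i) := by
    rw [I_triple u mg, ← I_add mP mP, ← I_add mB (add_mem mP mP),
      ← I_sub (add_mem mB (add_mem mP mP)) mW]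
    congr 1
    rw [TB, ← Finset.sum_add_distrib, ← Finset.sum_add_distrib, ← Finset.sum_sub_distrib]
    refine Finset.sum_congr rfl fun i _ => ?_
    rw [D_Lap_mul, X_sq]
    ring
  have eS : I (∑ i, D i (Lap (u * ψ ^ (k + 3))) ^ 2) =
      I (TB u ψ k) + (I (∑ i, D i (Lap u) * (ψ ^ (k + 3) * X u (ψ ^ (k + 3)) i)) +
      I (∑ i, D i (Lap u) * (ψ ^ (k + 3) * X u (ψ ^ (k + 3)) i))) +
      I (∑ i, X u (ψ ^ (k + 3)) i ^ 2) := by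
    rw [← I_add mP mP, ← I_add mB (add_mem mP mP),
      ← I_add (add_mem mB (add_mem mP mP)) mXX]
    congr 1
    rw [TB, ← Finset.sum_add_distrib, ← Finset.sum_add_distrib, ← Finset.sum_add_distrib]
    refine Finset.sum_congr rfl fun i _ => ?_
    rw [D_Lap_mul]
    ring
  rw [eS] at hst
  generalize I (-(Lap (Lap (Lap u))) * (u * (ψ ^ (k + 3) * ψ ^ (k + 3)))) = A at *
  generalize I (TB u ψ k) = B at *
  generalize I (∑ i, D i (Lap u) * (ψ ^ (k + 3) * X u (ψ ^ (k + 3)) i)) = P at *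
  generalize I (∑ i, D i (Lap u) * Z u (ψ ^ (k + 3)) i) = W at *
  generalize I (∑ i, X u (ψ ^ (k + 3)) i ^ 2) = Q at *
  generalize I (T0 u ψ r k) = D0 at *
  generalize I (T1 u ψ r k) = D1 at *
  generalize I (T2 u ψ r k) = D2 at *
  obtain ⟨T, hT⟩ : ∃ T : ℝ, T = D0 + D1 + D2 := ⟨_, rfl⟩
  rw [← hT] at hP hW hX
  have hKT : 0 ≤ K1 * T := by rw [hT]; positivity
  have hP' := abs_le.1 hP
  have hW' := abs_le.1 hW
  have dB : d * B ≤ B / 6 := by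
    have := mul_le_mul_of_nonneg_right hd1 hB0
    linarith
  have i1 : q * A ≤ d * B + 2 * (K1 * T) := by rw [hq]; linarith
  have i2 : B ≤ 2 * A + 6 * (K1 * T) := by linarith
  have i3 : d * B ≤ 2 * (q / 4 * A) + (K1 * T) := by
    have := mul_le_mul_of_nonneg_left i2 hd0.le
    have := mul_le_mul_of_nonneg_right hd2 hA0
    have := mul_le_mul_of_nonneg_right hd1 hKT
    linarith
  have i4 : A ≤ 6 / q * (K1 * T) := by
    rw [div_mul_eq_mul_div, le_div_iff₀ hq0]
    linarith
  have i5 : A + B ≤ L * T := by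
    rw [hL]
    have : 18 / q * (K1 * T) = 3 * (6 / q * (K1 * T)) := by ring
    linarith
  have s1 : d2 ≤ 1 / 8 := by
    have := mul_nonneg hd20.le hL0
    linarith
  have s2 : d3 ≤ 1 / 8 := by
    have := mul_nonneg hd30.le hK2
    linarith
  have j1 : D2 ≤ 2 * (d2 * B) + 2 * K2 * D1 := by
    have a1 := mul_le_mul_of_nonneg_right s1 hD2
    have a2 := mul_nonneg hd20.le hB0
    have a3 := mul_nonneg hK2 hD1
    linarith
  have j2 : D1 ≤ 2 * (d3 * D2) + 2 * (K3 * D0) := by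
    have a1 := mul_le_mul_of_nonneg_right s2 hD1
    have a2 := mul_nonneg hd30.le hD2
    have a3 := mul_nonneg hK3 hD0
    linarith
  have j3 : D1 ≤ 8 * (d3 * (d2 * B)) + 4 * (K3 * D0) := by
    have a1 := mul_le_mul_of_nonneg_left j1 hd30.le
    have a2 : d3 * K2 * D1 ≤ 1 / 8 * D1 :=
      mul_le_mul_of_nonneg_right (by linarith) hD1
    linarith
  have j4 : T ≤ 4 * (d2 * B) + (1 + (2 * K2 + 1) * (4 * K3)) * D0 := by
    have a1 := mul_le_mul_of_nonneg_left j3 (by positivity : 0 ≤ 2 * K2 + 1)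
    have a2 : (2 * K2 + 1) * (8 * (d3 * (d2 * B))) ≤ 2 * (d2 * B) := by
      have : (2 * K2 + 1) * (8 * d3) * (d2 * B) ≤ 2 * (d2 * B) :=
        mul_le_mul_of_nonneg_right (by linarith) (by positivity)
      linarith
    rw [hT]
    linarith
  have j5 : L * T ≤ 1 / 2 * B + L * (1 + (2 * K2 + 1) * (4 * K3)) * D0 := by
    have a1 := mul_le_mul_of_nonneg_left j4 hL0
    have a2 : L * d2 * B ≤ 1 / 8 * B := mul_le_mul_of_nonneg_right (by linarith) hB0
    linarith
  linarith

/-- Existence of good cutoffs. -/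
theorem exists_cutoff (n : ℕ) : ∃ c : ℝ, 0 ≤ c ∧ ∀ R : ℝ, 0 < R → ∃ ψ : S n, Good c R⁻¹ ψ ∧
    (∀ x ∈ Metric.ball (0 : EuclideanSpace ℝ (Fin n)) R, ψ.1 x = 1) ∧
    (∀ x, x ∉ Metric.ball (0 : EuclideanSpace ℝ (Fin n)) (2 * R) → ψ.1 x = 0) := by
  let b : ContDiffBump (0 : EuclideanSpace ℝ (Fin n)) := ⟨1, 2, by norm_num, by norm_num⟩
  have hb : ContDiff ℝ (⊤ : ℕ∞) b := b.contDiff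
  let χ : S n := ⟨b, hb⟩
  have hχ : χ ∈ CS n := b.hasCompactSupport
  have bdd : ∀ f : S n, f ∈ CS n → ∃ c : ℝ, 0 ≤ c ∧ ∀ x, |f.1 x| ≤ c := fun f hf => by
    obtain ⟨C, hC⟩ := HasCompactSupport.exists_bound_of_continuous (f := f.1) hf (S_cont f)
    exact ⟨C, (norm_nonneg _).trans (hC 0), hC⟩
  choose c1 hc1 hc1' using fun i => bdd _ (D_mem i hχ)
  choose c2 hc2 hc2' using fun i j => bdd _ (D_mem i (D_mem j hχ))
  choose c3 hc3 hc3' using fun i j l => bdd _ (D_mem i (D_mem j (D_mem l hχ)))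
  have n1 : 0 ≤ ∑ i, c1 i := Finset.sum_nonneg fun i _ => hc1 i
  have n2 : 0 ≤ ∑ i, ∑ j, c2 i j :=
    Finset.sum_nonneg fun i _ => Finset.sum_nonneg fun j _ => hc2 i j
  have n3 : 0 ≤ ∑ i, ∑ j, ∑ l, c3 i j l :=
    Finset.sum_nonneg fun i _ => Finset.sum_nonneg fun j _ => Finset.sum_nonneg fun l _ =>
      hc3 i j l
  refine ⟨∑ i, c1 i + ∑ i, ∑ j, c2 i j + ∑ i, ∑ j, ∑ l, c3 i j l, by positivity, fun R hR => ?_⟩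
  have hRi : 0 < R⁻¹ := inv_pos.2 hR
  -- scaling
  let sc : S n → S n := fun f => ⟨fun x => f.1 (R⁻¹ • x), by
    have : ContDiff ℝ (⊤ : ℕ∞) (fun x => f.1 (R⁻¹ • x)) :=
      (S_smooth f).comp (contDiff_const_smul R⁻¹)
    exact this⟩
  have Dsc : ∀ i f, D i (sc f) = R⁻¹ • sc (D i f) := fun i f => by
    ext x
    change fderiv ℝ (fun x => f.1 (R⁻¹ • x)) x _ = R⁻¹ * fderiv ℝ f.1 (R⁻¹ • x) _
    rw [fderiv_comp_smul]
    rfl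
  have scv : ∀ f x, (sc f).1 x = f.1 (R⁻¹ • x) := fun f x => rfl
  refine ⟨sc χ, ⟨hRi, ?_, fun x => b.nonneg, fun x => b.le_one, fun i x => ?_, fun i j x => ?_,
    fun i j l x => ?_⟩, fun x hx => ?_, fun x hx => ?_⟩
  · exact HasCompactSupport.comp_smul (f := χ.1) hχ hRi.ne'
  · rw [Dsc, coe_smul, scv, abs_mul, abs_of_pos hRi, mul_comm]
    refine mul_le_mul_of_nonneg_right ((hc1' i _).trans ?_) hRi.le
    have := Finset.single_le_sum (f := c1) (fun i _ => hc1 i) (Finset.mem_univ i)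
    linarith
  · rw [Dsc, Derivation.map_smul, Dsc, smul_smul, coe_smul, scv, abs_mul,
      abs_of_nonneg (by positivity), mul_comm, ← sq]
    refine mul_le_mul_of_nonneg_right ((hc2' i j _).trans ?_) (by positivity)
    have t1 := Finset.single_le_sum (f := fun j => c2 i j) (fun j _ => hc2 i j) (Finset.mem_univ j)
    have t2 := Finset.single_le_sum (f := fun i => ∑ j, c2 i j)
      (fun i _ => Finset.sum_nonneg fun j _ => hc2 i j) (Finset.mem_univ i)
    linarith
  · rw [Dsc, Derivation.map_smul, Dsc, Derivation.map_smul, Derivation.map_smul, Dsc, smul_smul,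
      smul_smul, coe_smul, scv, abs_mul,
      abs_of_nonneg (by positivity), mul_comm, show R⁻¹ * R⁻¹ * R⁻¹ = R⁻¹ ^ 3 by ring]
    refine mul_le_mul_of_nonneg_right ((hc3' i j l _).trans ?_) (by positivity)
    have t0 := Finset.single_le_sum (f := fun l => c3 i j l) (fun l _ => hc3 i j l)
      (Finset.mem_univ l)
    have t1 := Finset.single_le_sum (f := fun j => ∑ l, c3 i j l)
      (fun j _ => Finset.sum_nonneg fun l _ => hc3 i j l) (Finset.mem_univ j)
    have t2 := Finset.single_le_sum (f := fun i => ∑ j, ∑ l, c3 i j l)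
      (fun i _ => Finset.sum_nonneg fun j _ => Finset.sum_nonneg fun l _ => hc3 i j l)
      (Finset.mem_univ i)
    linarith
  · refine b.one_of_mem_closedBall ?_
    rw [mem_closedBall_zero_iff, norm_smul, Real.norm_of_nonneg hRi.le]
    rw [mem_ball_zero_iff] at hx
    change R⁻¹ * ‖x‖ ≤ 1
    rw [inv_mul_le_iff₀ hR]
    linarith
  · refine b.zero_of_le_dist ?_
    rw [dist_zero_right, norm_smul, Real.norm_of_nonneg hRi.le]
    rw [mem_ball_zero_iff, not_lt] at hx
    change 2 ≤ R⁻¹ * ‖x‖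
    rw [le_inv_mul_iff₀ hR]
    linarith


/-- Pointwise Young inequality used for the volume estimate. -/
theorem young_point {p : ℝ} (hp : 1 < p) {k : ℕ} (hk : 6 ≤ (p - 1) * k) {K : ℝ} (hK : 0 ≤ K) :
    ∃ C : ℝ, 0 ≤ C ∧ ∀ r t v : ℝ, 0 < r → 0 ≤ t → t ≤ 1 →
      K * (r ^ 6 * (t ^ k * v) ^ 2) ≤
        1 / 2 * (|v| ^ (p + 1) * t ^ (2 * (k + 3))) + C * r ^ (6 * (p + 1) / (p - 1)) := by
  have hp1 : 0 < p - 1 := by linarith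
  refine ⟨1 / 2 * (2 * K) ^ ((p + 1) / (p - 1)), by positivity, fun r t v hr ht0 ht1 => ?_⟩
  have hc : ((p + 1) / 2).HolderConjugate ((p + 1) / (p - 1)) := by
    rw [Real.holderConjugate_iff]
    refine ⟨by linarith, ?_⟩
    have : p + 1 ≠ 0 := by linarith
    field_simp
    ring
  have hy := Real.young_inequality_of_nonneg (sq_nonneg (t ^ k * v))
    (by positivity : 0 ≤ 2 * K * r ^ 6) hc
  have h1 : ((t ^ k * v) ^ 2) ^ ((p + 1) / 2) / ((p + 1) / 2) ≤ |v| ^ (p + 1) * t ^ (2 * (k + 3)) := by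
    refine (div_le_self (by positivity) (by linarith)).trans ?_
    rw [← sq_abs, ← Real.rpow_natCast, ← Real.rpow_mul (abs_nonneg _),
      show ((2 : ℕ) : ℝ) * ((p + 1) / 2) = p + 1 by push_cast; ring, abs_mul,
      Real.mul_rpow (abs_nonneg _) (abs_nonneg _), mul_comm]
    refine mul_le_mul_of_nonneg_left ?_ (by positivity)
    rw [abs_of_nonneg (by positivity), ← Real.rpow_natCast, ← Real.rpow_mul ht0,
      ← Real.rpow_natCast]
    refine Real.rpow_le_rpow_of_exponent_ge' ht0 ht1 (by positivity) ?_
    push_cast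
    linarith
  have h2 : (2 * K * r ^ 6) ^ ((p + 1) / (p - 1)) / ((p + 1) / (p - 1)) ≤
      (2 * K) ^ ((p + 1) / (p - 1)) * r ^ (6 * (p + 1) / (p - 1)) := by
    refine (div_le_self (by positivity) ?_).trans ?_
    · rw [le_div_iff₀ hp1]; linarith
    rw [Real.mul_rpow (by positivity) (by positivity), ← Real.rpow_natCast r 6,
      ← Real.rpow_mul hr.le, mul_div_assoc]
    push_cast
    exact le_rfl
  linarith

theorem main_aux (n : ℕ) (p : ℝ) (hp : 1 < p)
    (u : EuclideanSpace ℝ (Fin n) → ℝ) (hu : ContDiff ℝ (⊤ : ℕ∞) u)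
    (heq : ∀ x, laplacian (laplacian (laplacian u)) x = -(|u x| ^ (p - 1) * u x))
    (hstab : ∀ φ : EuclideanSpace ℝ (Fin n) → ℝ, ContDiff ℝ (⊤ : ℕ∞) φ →
      HasCompactSupport φ →
      p * (∫ x, |u x| ^ (p - 1) * φ x ^ 2) ≤ ∫ x, ‖gradient (laplacian φ) x‖ ^ 2) :
    ∃ C : ℝ, 0 < C ∧ ∀ R : ℝ, 0 < R →
      ((∫ x in Metric.ball (0 : EuclideanSpace ℝ (Fin n)) R, |u x| ^ (p + 1))
          + (∫ x in Metric.ball (0 : EuclideanSpace ℝ (Fin n)) R,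
              ‖gradient (laplacian u) x‖ ^ 2) ≤
        C * R ^ (-6 : ℝ) *
          ∫ x in Metric.ball (0 : EuclideanSpace ℝ (Fin n)) (2 * R), u x ^ 2) ∧
      ((∫ x in Metric.ball (0 : EuclideanSpace ℝ (Fin n)) R, |u x| ^ (p + 1))
          + (∫ x in Metric.ball (0 : EuclideanSpace ℝ (Fin n)) R,
              ‖gradient (laplacian u) x‖ ^ 2) ≤
        C * R ^ ((n : ℝ) - 6 * (p + 1) / (p - 1))) := by
  have hp1 : 0 < p - 1 := by linarith
  obtain ⟨U, hU⟩ : ∃ U : S n, U.1 = u := ⟨⟨u, hu⟩, rfl⟩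
  obtain ⟨k, hk⟩ := exists_nat_ge (6 / (p - 1))
  have hk0 : 0 < k := by
    have : (0 : ℝ) < k := lt_of_lt_of_le (by positivity) hk
    exact_mod_cast this
  have hk6 : 6 ≤ (p - 1) * k := by
    rw [div_le_iff₀ hp1] at hk; linarith
  obtain ⟨c, hc, hcut⟩ := exists_cutoff n
  obtain ⟨C, hC, hE⟩ := energy (n := n) hk0 hc hp
  obtain ⟨C', hC', hY⟩ := young_point hp hk6 hC
  have hL3 : ∀ x, (Lap (Lap (Lap U))).1 x = -(|u x| ^ (p - 1) * u x) := fun x => by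
    rw [← heq x, ← hU, laplacian_coe, laplacian_coe, laplacian_coe]
  have hpow : ∀ v : ℝ, |v| ^ (p - 1) * v ^ 2 = |v| ^ (p + 1) := fun v => by
    rcases eq_or_ne v 0 with rfl | hv
    · rw [abs_zero, Real.zero_rpow (by linarith), Real.zero_rpow (by linarith)]; simp
    · rw [← sq_abs, ← Real.rpow_natCast, ← Real.rpow_add (abs_pos.2 hv)]
      congr 1
      push_cast
      ring
  let V : ℝ := volume.real (Metric.ball (0 : EuclideanSpace ℝ (Fin n)) 1)
  have hV : 0 ≤ V := measureReal_nonneg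
  refine ⟨C + 2 * (C' * (2 ^ n * V)) + 1, by positivity, fun R hR => ?_⟩
  obtain ⟨ψ, hG, hψ1, hψ0⟩ := hcut R hR
  have hRi : 0 < R⁻¹ := inv_pos.2 hR
  have me : ψ ^ (k + 3) ∈ CS n := psi_mem hG (by simp)
  have mue : U * ψ ^ (k + 3) ∈ CS n := Ideal.mul_mem_left _ _ me
  have mA : -(Lap (Lap (Lap U))) * (U * (ψ ^ (k + 3) * ψ ^ (k + 3))) ∈ CS n :=
    Ideal.mul_mem_left _ _ (Ideal.mul_mem_left _ _ (Ideal.mul_mem_left _ _ me))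
  have mB := TB_mem hG U (k := k)
  have m0 := T0_mem hG U hk0
  have vA : ∀ x, (-(Lap (Lap (Lap U))) * (U * (ψ ^ (k + 3) * ψ ^ (k + 3)))).1 x =
      |u x| ^ (p + 1) * ψ.1 x ^ (2 * (k + 3)) := fun x => by
    rw [coe_mul, coe_mul, coe_mul, coe_neg, hL3, coe_pow, ← hpow, hU]
    ring
  have v0 : ∀ x, (T0 U ψ R⁻¹ k).1 x = R⁻¹ ^ 6 * (ψ.1 x ^ k * u x) ^ 2 := fun x => by
    rw [T0, coe_smul, coe_pow, coe_mul, coe_pow, hU]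
  have nA : ∀ x, 0 ≤ (-(Lap (Lap (Lap U))) * (U * (ψ ^ (k + 3) * ψ ^ (k + 3)))).1 x := fun x => by
    rw [vA]
    have := hG.nonneg x
    positivity
  have hA0 := I_nonneg nA
  have hB0 := I_nonneg (TB_nonneg U ψ k)
  have hst : p * I (-(Lap (Lap (Lap U))) * (U * (ψ ^ (k + 3) * ψ ^ (k + 3)))) ≤
        I (∑ i, D i (Lap (U * ψ ^ (k + 3))) ^ 2) := by
    have := hstab (U * ψ ^ (k + 3)).1 (S_smooth _) mue
    rw [laplacian_coe] at this
    simp only [gradient_coe] at this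
    refine le_trans (le_of_eq ?_) (this.trans (le_of_eq ?_))
    · congr 1
      refine integral_congr_ae (Filter.Eventually.of_forall fun x => ?_)
      change (-(Lap (Lap (Lap U))) * (U * (ψ ^ (k + 3) * ψ ^ (k + 3)))).1 x =
        |u x| ^ (p - 1) * (U * ψ ^ (k + 3)).1 x ^ 2
      rw [vA, coe_mul, coe_pow, hU, ← hpow]
      ring
    · refine integral_congr_ae (Filter.Eventually.of_forall fun x => ?_)
      change _ = (∑ i, D i (Lap (U * ψ ^ (k + 3))) ^ 2).1 x
      rw [coe_sum]
      rfl
  have hAB := hE R⁻¹ ψ U hG hA0 hst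
  have hball : ∀ r : ℝ, MeasurableSet (Metric.ball (0 : EuclideanSpace ℝ (Fin n)) r) :=
    fun r => measurableSet_ball
  have l1 : (∫ x in Metric.ball (0 : EuclideanSpace ℝ (Fin n)) R, |u x| ^ (p + 1)) ≤
      I (-(Lap (Lap (Lap U))) * (U * (ψ ^ (k + 3) * ψ ^ (k + 3)))) := by
    refine le_trans (le_of_eq ?_)
      (setIntegral_le_integral (s := Metric.ball (0 : EuclideanSpace ℝ (Fin n)) R)
        (CS.integrable mA) (Filter.Eventually.of_forall nA))
    refine setIntegral_congr_fun (hball R) fun x hx => ?_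
    rw [vA, hψ1 x hx]
    simp
  have l2 : (∫ x in Metric.ball (0 : EuclideanSpace ℝ (Fin n)) R,
      ‖gradient (laplacian u) x‖ ^ 2) ≤ I (TB U ψ k) := by
    refine le_trans (le_of_eq ?_)
      (setIntegral_le_integral (s := Metric.ball (0 : EuclideanSpace ℝ (Fin n)) R)
        (CS.integrable mB) (Filter.Eventually.of_forall (TB_nonneg U ψ k)))
    refine setIntegral_congr_fun (hball R) fun x hx => ?_
    change ‖gradient (laplacian u) x‖ ^ 2 = (TB U ψ k).1 x
    rw [← hU, laplacian_coe, gradient_coe, TB, coe_sum]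
    refine Finset.sum_congr rfl fun i _ => ?_
    rw [coe_pow, coe_mul, coe_pow, hψ1 x hx]
    simp
  have nu : 0 ≤ ∫ x in Metric.ball (0 : EuclideanSpace ℝ (Fin n)) (2 * R), u x ^ 2 :=
    integral_nonneg fun x => sq_nonneg _
  have hIu : IntegrableOn (fun x => u x ^ 2)
      (Metric.ball (0 : EuclideanSpace ℝ (Fin n)) (2 * R)) := by
    have : Continuous fun x => u x ^ 2 := hu.continuous.pow 2
    exact (this.continuousOn.integrableOn_compact
      (isCompact_closedBall 0 (2 * R))).mono_set Metric.ball_subset_closedBall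
  have l3 : I (T0 U ψ R⁻¹ k) ≤ R ^ (-6 : ℝ) *
      ∫ x in Metric.ball (0 : EuclideanSpace ℝ (Fin n)) (2 * R), u x ^ 2 := by
    have e6 : R ^ (-6 : ℝ) = R⁻¹ ^ 6 := by
      rw [Real.rpow_neg hR.le, inv_pow]
      norm_cast
    rw [e6, ← integral_indicator (hball _), ← integral_const_mul]
    refine integral_mono (CS.integrable m0) ((hIu.integrable_indicator (hball _)).const_mul _)
      fun x => ?_
    change (T0 U ψ R⁻¹ k).1 x ≤ _
    rw [v0]
    refine mul_le_mul_of_nonneg_left ?_ (by positivity)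
    by_cases hx : x ∈ Metric.ball (0 : EuclideanSpace ℝ (Fin n)) (2 * R)
    · rw [Set.indicator_of_mem hx, mul_pow]
      have h1 : (ψ.1 x ^ k) ^ 2 ≤ 1 :=
        pow_le_one₀ (pow_nonneg (hG.nonneg x) _) (pow_le_one₀ (hG.nonneg x) (hG.le_one x))
      exact mul_le_of_le_one_left (sq_nonneg _) h1
    · rw [Set.indicator_of_notMem hx, hψ0 x hx, zero_pow hk0.ne']
      simp
  have hvol : volume.real (Metric.ball (0 : EuclideanSpace ℝ (Fin n)) (2 * R)) =
      (2 * R) ^ n * V := by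
    have := Measure.addHaar_ball_of_pos (volume : Measure (EuclideanSpace ℝ (Fin n))) 0
      (by positivity : 0 < 2 * R)
    rw [Measure.real, this, ENNReal.toReal_mul, ENNReal.toReal_ofReal (by positivity)]
    simp [V, Measure.real]
  have l4 : C * I (T0 U ψ R⁻¹ k) ≤
      1 / 2 * I (-(Lap (Lap (Lap U))) * (U * (ψ ^ (k + 3) * ψ ^ (k + 3)))) +
        C' * R⁻¹ ^ (6 * (p + 1) / (p - 1)) * ((2 * R) ^ n * V) := by
    have hi : Integrable ((Metric.ball (0 : EuclideanSpace ℝ (Fin n)) (2 * R)).indicator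
        fun _ => C' * R⁻¹ ^ (6 * (p + 1) / (p - 1))) := by
      refine IntegrableOn.integrable_indicator ?_ (hball _)
      exact integrableOn_const measure_ball_lt_top.ne
    have e1 : C' * R⁻¹ ^ (6 * (p + 1) / (p - 1)) * ((2 * R) ^ n * V) =
        ∫ x, (Metric.ball (0 : EuclideanSpace ℝ (Fin n)) (2 * R)).indicator
          (fun _ => C' * R⁻¹ ^ (6 * (p + 1) / (p - 1))) x := by
      rw [integral_indicator (hball _), setIntegral_const, hvol, smul_eq_mul, mul_comm]
    rw [e1, I, I, ← integral_const_mul, ← integral_const_mul,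
      ← integral_add ((CS.integrable mA).const_mul _) hi]
    refine integral_mono ((CS.integrable m0).const_mul _)
      (((CS.integrable mA).const_mul _).add hi) fun x => ?_
    change C * (T0 U ψ R⁻¹ k).1 x ≤
      1 / 2 * (-(Lap (Lap (Lap U))) * (U * (ψ ^ (k + 3) * ψ ^ (k + 3)))).1 x +
      (Metric.ball (0 : EuclideanSpace ℝ (Fin n)) (2 * R)).indicator
          (fun _ => C' * R⁻¹ ^ (6 * (p + 1) / (p - 1))) x
    rw [v0, vA]
    by_cases hx : x ∈ Metric.ball (0 : EuclideanSpace ℝ (Fin n)) (2 * R)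
    · rw [Set.indicator_of_mem hx]
      exact hY _ _ _ hRi (hG.nonneg x) (hG.le_one x)
    · rw [Set.indicator_of_notMem hx, hψ0 x hx, zero_pow hk0.ne', zero_pow (by simp)]
      simp
  have eR : R⁻¹ ^ (6 * (p + 1) / (p - 1)) * R ^ n = R ^ ((n : ℝ) - 6 * (p + 1) / (p - 1)) := by
    rw [Real.rpow_sub hR, Real.inv_rpow hR.le, Real.rpow_natCast]
    field_simp
  have eR' : C' * R⁻¹ ^ (6 * (p + 1) / (p - 1)) * ((2 * R) ^ n * V) =
      C' * (2 ^ n * V) * R ^ ((n : ℝ) - 6 * (p + 1) / (p - 1)) := by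
    rw [← eR, mul_pow]
    ring
  rw [eR'] at l4
  have nR6 : 0 ≤ R ^ (-6 : ℝ) * ∫ x in Metric.ball (0 : EuclideanSpace ℝ (Fin n)) (2 * R), u x ^ 2 :=
    mul_nonneg (by positivity) nu
  have nRn : 0 ≤ R ^ ((n : ℝ) - 6 * (p + 1) / (p - 1)) := by positivity
  have nC2 : 0 ≤ C' * (2 ^ n * V) := by positivity
  constructor
  · have a1 := mul_le_mul_of_nonneg_left l3 hC
    have a2 := mul_nonneg nC2 nR6
    linarith
  · have a2 := mul_nonneg hC nRn
    linarith

end TriH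

/-- **Lemma 5.2.** For a smooth stable solution `u` of the triharmonic Lane–Emden equation,
there is `C > 0` so that for every `R > 0`:
`∫_{B_R} |u|^{p+1} + ∫_{B_R} |∇Δu|² ≤ C R⁻⁶ ∫_{B_{2R}} u²` and
`∫_{B_R} |u|^{p+1} + ∫_{B_R} |∇Δu|² ≤ C R^{n - 6(p+1)/(p-1)}`. -/
theorem triharmonic_stable_energy_growth (n : ℕ) (hn : 1 ≤ n) (p : ℝ) (hp : 1 < p)
    (u : EuclideanSpace ℝ (Fin n) → ℝ) (hu : ContDiff ℝ (⊤ : ℕ∞) u)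
    (heq : ∀ x, laplacian (laplacian (laplacian u)) x = -(|u x| ^ (p - 1) * u x))
    (hstab : ∀ φ : EuclideanSpace ℝ (Fin n) → ℝ, ContDiff ℝ (⊤ : ℕ∞) φ →
      HasCompactSupport φ →
      p * (∫ x, |u x| ^ (p - 1) * φ x ^ 2) ≤ ∫ x, ‖gradient (laplacian φ) x‖ ^ 2) :
    ∃ C : ℝ, 0 < C ∧ ∀ R : ℝ, 0 < R →
      ((∫ x in Metric.ball (0 : EuclideanSpace ℝ (Fin n)) R, |u x| ^ (p + 1))
          + (∫ x in Metric.ball (0 : EuclideanSpace ℝ (Fin n)) R,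
              ‖gradient (laplacian u) x‖ ^ 2) ≤
        C * R ^ (-6 : ℝ) *
          ∫ x in Metric.ball (0 : EuclideanSpace ℝ (Fin n)) (2 * R), u x ^ 2) ∧
      ((∫ x in Metric.ball (0 : EuclideanSpace ℝ (Fin n)) R, |u x| ^ (p + 1))
          + (∫ x in Metric.ball (0 : EuclideanSpace ℝ (Fin n)) R,
              ‖gradient (laplacian u) x‖ ^ 2) ≤
        C * R ^ ((n : ℝ) - 6 * (p + 1) / (p - 1))) := by
  exact TriH.main_aux n p hp u hu heq hstab
end
end

section
/- Let A₁, A₂ be real numbers with A₁ + 12 > 0 and A₂ ≥ 0. Then there exist real numbers c₁, c₂, nonnegative real numbers d₁, d₂, and real numbers e_{ij} (0 ≤ i, j ≤ 2) such that for every three-times continuously differentiable function f : ℝ → ℝ, the function G(λ) = ∑_{0≤i,j≤2} e_{ij} λ^{i+j} f^{(i)}(λ) f^{(j)}(λ) is differentiable on (0,∞) and for every λ > 0: 3λ⁵ f'''(λ)² + A₁ λ³ f''(λ)² + A₂ λ f'(λ)² = 3λ (λ² f'''(λ) + c₁ λ f''(λ))² + d₁ λ (λ f''(λ) + c₂ f'(λ))²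 + d₂ λ f'(λ)² + G'(λ). -/
/-- **Lemma 7.2 (Jordan-form decomposition).** If `A₁ + 12 > 0` and `A₂ ≥ 0`, there exist
`c₁, c₂ : ℝ`, nonnegative `d₁, d₂` and coefficients `e i j` such that for every `C³` function
`f : ℝ → ℝ`, with `G(λ) = ∑_{0 ≤ i,j ≤ 2} e i j · λ^{i+j} f⁽ⁱ⁾(λ) f⁽ʲ⁾(λ)`, the function `G` is
differentiable on `(0,∞)` and for every `λ > 0`:
`3λ⁵ f'''(λ)² + A₁ λ³ f''(λ)² + A₂ λ f'(λ)²
  = 3λ (λ² f'''(λ) + c₁ λ f''(λ))² + d₁ λ (λ f''(λ) + c₂ f'(λ))² + d₂ λ f'(λ)² + G'(λ)`. -/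
theorem triharmonic_jordan_decomposition (A₁ A₂ : ℝ) (hA1 : 0 < A₁ + 12) (hA2 : 0 ≤ A₂) :
    ∃ (c₁ c₂ d₁ d₂ : ℝ), 0 ≤ d₁ ∧ 0 ≤ d₂ ∧ ∃ e : Fin 3 → Fin 3 → ℝ,
      ∀ f : ℝ → ℝ, ContDiff ℝ 3 f →
        (∀ lam : ℝ, 0 < lam → DifferentiableAt ℝ
          (fun t : ℝ => ∑ i : Fin 3, ∑ j : Fin 3,
            e i j * t ^ ((i : ℕ) + (j : ℕ)) * iteratedDeriv (i : ℕ) f t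
              * iteratedDeriv (j : ℕ) f t) lam) ∧
        ∀ lam : ℝ, 0 < lam →
          3 * lam ^ 5 * (iteratedDeriv 3 f lam) ^ 2
              + A₁ * lam ^ 3 * (iteratedDeriv 2 f lam) ^ 2
              + A₂ * lam * (deriv f lam) ^ 2
            = 3 * lam * (lam ^ 2 * iteratedDeriv 3 f lam + c₁ * lam * iteratedDeriv 2 f lam) ^ 2
              + d₁ * lam * (lam * iteratedDeriv 2 f lam + c₂ * deriv f lam) ^ 2
              + d₂ * lam * (deriv f lam) ^ 2
              + deriv (fun t : ℝ => ∑ i : Fin 3, ∑ j : Fin 3,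
                  e i j * t ^ ((i : ℕ) + (j : ℕ)) * iteratedDeriv (i : ℕ) f t
                    * iteratedDeriv (j : ℕ) f t) lam := by
  refine ⟨2, 0, A₁ + 12, A₂, hA1.le, hA2, fun i j => if i = 2 ∧ j = 2 then -6 else 0, ?_⟩
  intro f hf
  have key : ∀ lam : ℝ, HasDerivAt (fun t : ℝ => ∑ i : Fin 3, ∑ j : Fin 3,
      (if i = 2 ∧ j = 2 then (-6 : ℝ) else 0) * t ^ ((i : ℕ) + (j : ℕ)) * iteratedDeriv (i : ℕ) f t
        * iteratedDeriv (j : ℕ) f t)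
      (-24 * lam ^ 3 * (iteratedDeriv 2 f lam) ^ 2
        - 12 * lam ^ 4 * iteratedDeriv 2 f lam * iteratedDeriv 3 f lam) lam := by
    intro lam
    have hfun : (fun t : ℝ => ∑ i : Fin 3, ∑ j : Fin 3,
      (if i = 2 ∧ j = 2 then (-6 : ℝ) else 0) * t ^ ((i : ℕ) + (j : ℕ)) * iteratedDeriv (i : ℕ) f t
        * iteratedDeriv (j : ℕ) f t) =
        fun t : ℝ => (-6 * t ^ 4) * (iteratedDeriv 2 f t * iteratedDeriv 2 f t) := by
      funext t
      simp [Fin.sum_univ_three]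
      ring
    rw [hfun]
    have hd : HasDerivAt (iteratedDeriv 2 f) (iteratedDeriv 3 f lam) lam := by
      have h1 : Differentiable ℝ (iteratedDeriv 2 f) :=
        hf.differentiable_iteratedDeriv 2 (by norm_num)
      rw [iteratedDeriv_succ (n := 2)]
      exact (h1 lam).hasDerivAt
    have hp : HasDerivAt (fun t : ℝ => -6 * t ^ 4) (-6 * (4 * lam ^ 3)) lam := by
      simpa using (hasDerivAt_pow 4 lam).const_mul (-6 : ℝ)
    refine (hp.mul (hd.mul hd)).congr_deriv ?_
    simp only [Pi.mul_apply]
    ring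
  refine ⟨fun lam _ => (key lam).differentiableAt, fun lam _ => ?_⟩
  rw [(key lam).deriv]
  ring
end
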